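/- (Typical norm of an LDA constellation point.) Fix rationals 0 < R < R_f < 1, a constant D > max{1/(1−R_f), 2}, ω ∈ (0,1), and λ > max{ 1/(D(1−R_f)−1), 1/(2R), 1/(1−R), 1/(D−2), (1 − 1/(D²−1) − 1/(D(1−R)))^{−1} }. Let p : ℕ → ℕ be a sequence of primes with p(n)/n^λ → 1; restrict to n with n(1−R), n(1−R_f) ∈ ℕ. For each such n, let H(n) ∈ {0,1}^{n(1−R) × n} be a skeleton matrix whose Tanner graph is D-good (with right/left node ratio f = 1−R), and whose submatrix H_f(n) formed by the last n(1−R_f) rows also has a D-good Tanner graph (with ratio f = 1−R_f). Let ℍ(n) be the associated random matrix over 𝔽_{p(n)}, let s(n) ∈ 𝔽_{p(n)}^{n(1−R)} be any nonzero syndrome, and set ρ_eff(n) = √n·p(n)^{1−R}/√(2πe). Then, as n → ∞: (i) the probability that there exists x ∈ ℤⁿ with ‖x‖ ≤ ρ_eff(n)(1 − n^{−ω}) and ℍ(n)x ≡ s(n) (mod p(n)) tends to 0; (ii) the probability that there exists x ∈ ℤⁿ with ‖x‖ ≤ ρ_eff(n)(1 + n^{−ω}) and ℍ(n)x ≡ s(n)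 (mod p(n)) tends to 1. Consequently, with probability tending to 1, every minimum-norm solution x satisfies ρ_eff(n)(1 − n^{−ω}) ≤ ‖x‖ ≤ ρ_eff(n)(1 + n^{−ω}). -/

import Mathlib

/-!
The sample space is the set `compat p H` of matrices vanishing off the skeleton, whose rows are
independent and uniform on coordinate subspaces. For an integer vector `y`, the constraint
`⟨h, y⟩ = s_i` on the `i`-th row `h` has probability `1 / p`, unless `y` vanishes on the neighbourhood of the
check `i`; for a pair `(x, y)` the two constraints are independent unless `y` is proportional to `x`
modulo `p` there. With `parCount H x L y` the number of checks on which `y ≡ c x` for some `c ∈ L`,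
the probabilities of the events `ℍ y = s` and `ℍ x = ℍ y = s` are thus at most
`p ^ (parCount H 1 {0} y - m)` and, if `x` has no zero coordinate modulo `p`,
`p ^ (parCount H x univ y - 2 m)` (`first_moment`, `pair_moment`).

Everything rests on showing that the sum of `p ^ parCount` over the lattice points of a ball of
radius about `ρ_eff` is asymptotically the number of these points (`parCount_sum_le`). Label each
parallel check by its ratio `c`. If every label class is within the expansion range, then `t`
labelled checks force at least `D t / f` coordinates of `y`, each of which costs a factor
`κ ≍ p ^ (-f)` in the count of lattice points; the gain `p ^ t` and the `p ^ t` choices of labels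
are beaten because `D > 2` and `λ (D - 2) > 1` (`labelled_sum_le`). If some class is larger, then
`y ≡ c x` off a small nonempty set `S` of variables. Expansion of `S` gives about `f D |S|` checks
meeting `S`, none of which carries the label `c`, so the weight `p ^ parCount` loses a factor
`p ^ (f D |S|)` up to other labels, whereas there are only about `(√n p ^ f) ^ |S|` vectors of this
kind.

The number of lattice points in a ball is compared with its volume by means of unit cubes, and the
volume is evaluated by Stirling's formula with a polynomial loss, which is harmless in front of
`(1 ± n ^ (-ω)) ^ n = exp (± n ^ (1 - ω))` up to lower order terms. At radius
`ρ_eff (1 - n ^ (-ω))` the expected number of solutions tends to zero, the zero vector modulo `p`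
being excluded by `s ≠ 0` (`exists_prob_le`, `partI_bound`). At radius `ρ_eff (1 + n ^ (-ω))` the
Cauchy-Schwarz inequality is applied to the number of solutions without zero coordinates
(`prob_ge`, `le_exists_prob`, `partII_bound`); the at most `p` multiples of `x` modulo `p` in the
ball contribute at most `p ^ (m + 1)`, which is negligible against the number of lattice points.
If a solution exists within the larger radius and none within the smaller one, every minimal
solution lies between the two, which gives the last assertion.
-/

open Filter

/-- Euclidean norm of an integer vector. -/
noncomputable def intNorm {n : ℕ} (x : Fin n → ℤ) : ℝ :=
  Real.sqrt (∑ i, ((x i : ℝ)) ^ 2)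

/-- Asymptotic effective radius `√n · p^{1−R} / √(2πe)`. -/
noncomputable def rhoEff (p n : ℕ) (R : ℝ) : ℝ :=
  Real.sqrt n * (p : ℝ) ^ ((1 : ℝ) - R) / Real.sqrt (2 * Real.pi * Real.exp 1)

/-- The Tanner graph of the binary skeleton matrix `H` (rows = check nodes, columns =
variable nodes, edge iff entry `1`), with `mdim = f·n` rows, is `D`-good: every set `S` of
variable nodes with `|S| ≤ n/(D+1)` has `|N(S)| ≥ fD|S|`, and every set `T` of check nodes
with `|T| ≤ fn/(D+1)` has `|N(T)| ≥ (D/f)|T|`. -/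
def TannerDGood {mdim n : ℕ} (H : Matrix (Fin mdim) (Fin n) Bool) (f D : ℝ) : Prop :=
  (∀ S : Set (Fin n), (S.ncard : ℝ) ≤ (n : ℝ) / (D + 1) →
    f * D * (S.ncard : ℝ) ≤ (Set.ncard {i : Fin mdim | ∃ j ∈ S, H i j = true} : ℝ)) ∧
  (∀ T : Set (Fin mdim), (T.ncard : ℝ) ≤ f * (n : ℝ) / (D + 1) →
    D * (T.ncard : ℝ) / f ≤ (Set.ncard {j : Fin n | ∃ i ∈ T, H i j = true} : ℝ))

/-- The Tanner subgraph of `H` given by the last `mf` rows (check nodes `i` with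
`mdim − mf ≤ i`), with ratio `f`, is `D`-good. -/
def TannerSubDGood {mdim n : ℕ} (H : Matrix (Fin mdim) (Fin n) Bool) (mf : ℕ)
    (f D : ℝ) : Prop :=
  (∀ S : Set (Fin n), (S.ncard : ℝ) ≤ (n : ℝ) / (D + 1) →
    f * D * (S.ncard : ℝ) ≤
      (Set.ncard {i : Fin mdim | mdim - mf ≤ (i : ℕ) ∧ ∃ j ∈ S, H i j = true} : ℝ)) ∧
  (∀ T : Set (Fin mdim), (∀ i ∈ T, mdim - mf ≤ (i : ℕ)) →
    (T.ncard : ℝ) ≤ f * (n : ℝ) / (D + 1) →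
    D * (T.ncard : ℝ) / f ≤ (Set.ncard {j : Fin n | ∃ i ∈ T, H i j = true} : ℝ))

/-! ### Lattice points in balls -/

/-- Volume of the unit Euclidean ball in dimension `k`. -/
noncomputable def ballVol (k : ℕ) : ℝ := √Real.pi ^ k / Real.Gamma ((k : ℝ) / 2 + 1)

/-- The lattice points of the closed Euclidean ball of radius `r ≥ 0`, as vectors in `ι → ℤ`. For
negative `r` this is the ball of radius `|r|`. -/
def latBall (ι : Type*) [Fintype ι] (r : ℝ) : Set (ι → ℤ) := {x | ∑ i, (x i : ℝ) ^ 2 ≤ r ^ 2}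

lemma ballVol_pos (k : ℕ) : 0 < ballVol k := by
  unfold ballVol
  have : 0 < Real.Gamma ((k : ℝ) / 2 + 1) := Real.Gamma_pos_of_pos (by positivity)
  positivity

lemma volume_sq_ball (ι : Type*) [Fintype ι] {r : ℝ} (hr : 0 ≤ r) :
    MeasureTheory.volume {x : ι → ℝ | ∑ i, x i ^ 2 ≤ r ^ 2}
      = ENNReal.ofReal (ballVol (Fintype.card ι) * r ^ Fintype.card ι) := by
  rcases isEmpty_or_nonempty ι with h | h
  · have : {x : ι → ℝ | ∑ i, x i ^ 2 ≤ r ^ 2} = Set.univ := by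
      ext x; simp; positivity
    rw [this, ← Set.pi_univ Set.univ, MeasureTheory.volume_pi_pi]
    simp [ballVol]
  · have := MeasureTheory.volume_sum_rpow_le (ι := ι) (p := 2) (by norm_num) r
    have h2 : {x : ι → ℝ | ∑ i, x i ^ 2 ≤ r ^ 2} =
        {x : ι → ℝ | (∑ i, |x i| ^ (2 : ℝ)) ^ (1 / (2 : ℝ)) ≤ r} := by
      ext x
      simp only [Set.mem_ofPred_eq]
      rw [← Real.sqrt_eq_rpow]
      have : ∑ i, |x i| ^ (2 : ℝ) = ∑ i, x i ^ 2 := by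
        refine Finset.sum_congr rfl fun i _ => ?_
        rw [Real.rpow_two, sq_abs]
      rw [this, Real.sqrt_le_left hr]
    rw [h2, this, mul_comm, ENNReal.ofReal_mul (ballVol_pos _).le, ENNReal.ofReal_pow hr]
    congr 2
    unfold ballVol
    rw [show (1 / 2 + 1 : ℝ) = 1 / 2 + 1 from rfl, Real.Gamma_add_one (by norm_num),
      Real.Gamma_one_half_eq]
    congr 2
    ring

lemma sq_sum_triangle {ι : Type*} [Fintype ι] (a b : ι → ℝ) {A B : ℝ} (hA : 0 ≤ A) (hB : 0 ≤ B)
    (ha : ∑ i, a i ^ 2 ≤ A ^ 2) (hb : ∑ i, b i ^ 2 ≤ B ^ 2) :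
    ∑ i, (a i + b i) ^ 2 ≤ (A + B) ^ 2 := by
  have h1 := Finset.sum_mul_sq_le_sq_mul_sq Finset.univ a b
  have h2 : (∑ i, a i * b i) ^ 2 ≤ (A * B) ^ 2 := by
    rw [mul_pow]
    exact h1.trans (mul_le_mul ha hb (Finset.sum_nonneg fun i _ => sq_nonneg _) (sq_nonneg _))
  have h3 := abs_le_of_sq_le_sq' h2 (by positivity)
  have : ∑ i, (a i + b i) ^ 2 = ∑ i, a i ^ 2 + 2 * ∑ i, a i * b i + ∑ i, b i ^ 2 := by
    rw [Finset.mul_sum, ← Finset.sum_add_distrib, ← Finset.sum_add_distrib]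
    exact Finset.sum_congr rfl fun i _ => by ring
  rw [this]; nlinarith [h3.2]

lemma abs_le_of_mem_latBall {ι : Type*} [Fintype ι] {r : ℝ} (hr : 0 ≤ r) {x : ι → ℤ}
    (hx : x ∈ latBall ι r) (i : ι) : |(x i : ℝ)| ≤ r := by
  have h : (x i : ℝ) ^ 2 ≤ r ^ 2 :=
    (Finset.single_le_sum (f := fun i => (x i : ℝ) ^ 2) (fun i _ => sq_nonneg _)
      (Finset.mem_univ i)).trans hx
  exact abs_le_of_sq_le_sq h hr

lemma latBall_subset_box {ι : Type*} [Fintype ι] [DecidableEq ι] {r : ℝ} (hr : 0 ≤ r) :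
    latBall ι r ⊆ (Fintype.piFinset fun _ : ι => Finset.Icc (-⌊r⌋) ⌊r⌋ : Finset (ι → ℤ)) := by
  intro x hx
  simp only [Finset.mem_coe, Fintype.mem_piFinset, Finset.mem_Icc]
  intro i
  have h := abs_le.1 (abs_le_of_mem_latBall hr hx i)
  constructor
  · have : -x i ≤ ⌊r⌋ := Int.le_floor.2 (by push_cast; linarith)
    linarith
  · exact Int.le_floor.2 h.2

lemma latBall_finite (ι : Type*) [Fintype ι] {r : ℝ} (hr : 0 ≤ r) : (latBall ι r).Finite := by
  classical
  exact (Finset.finite_toSet _).subset (latBall_subset_box hr)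

lemma latBall_ncard_le_box (ι : Type*) [Fintype ι] {r : ℝ} (hr : 0 ≤ r) :
    ((latBall ι r).ncard : ℝ) ≤ (2 * r + 1) ^ Fintype.card ι := by
  classical
  have h := Set.ncard_le_ncard (latBall_subset_box (ι := ι) hr) (Finset.finite_toSet _)
  rw [Set.ncard_coe_finset, Fintype.card_piFinset] at h
  simp only [Int.card_Icc, Finset.prod_const, Finset.card_univ] at h
  have h2 : (((⌊r⌋ + 1 - -⌊r⌋).toNat : ℕ) : ℝ) ≤ 2 * r + 1 := by
    have h0 : 0 ≤ ⌊r⌋ := Int.floor_nonneg.2 hr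
    have : (((⌊r⌋ + 1 - -⌊r⌋).toNat : ℕ) : ℝ) = ((⌊r⌋ + 1 - -⌊r⌋ : ℤ) : ℝ) := by
      rw [← Int.cast_natCast, Int.toNat_of_nonneg (by linarith)]
    rw [this]; push_cast
    linarith [Int.floor_le r]
  calc ((latBall ι r).ncard : ℝ) ≤ (((⌊r⌋ + 1 - -⌊r⌋).toNat : ℕ) : ℝ) ^ Fintype.card ι := by
        exact_mod_cast h
    _ ≤ _ := by gcongr

/-- The unit cubes centred at the points of a finite set of lattice points tile a region whose
volume is the number of points. -/
lemma volume_round_preimage {ι : Type*} [Fintype ι] (F : Set (ι → ℤ)) (hF : F.Finite) :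
    MeasureTheory.volume {y : ι → ℝ | (fun i => round (y i)) ∈ F} = (F.ncard : ENNReal) := by
  classical
  have hcell : ∀ x : ι → ℤ, {y : ι → ℝ | (fun i => round (y i)) = x} =
      Set.pi Set.univ fun i => Set.Ico ((x i : ℝ) - 1 / 2) ((x i : ℝ) + 1 / 2) := by
    intro x
    ext y
    simp only [Set.mem_ofPred_eq, Set.mem_pi, Set.mem_univ, true_imp_iff, Set.mem_Ico, funext_iff]
    refine forall_congr' fun i => ?_
    rw [round_eq, Int.floor_eq_iff]
    constructor <;> rintro ⟨h1, h2⟩ <;> constructor <;> linarith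
  have hU : {y : ι → ℝ | (fun i => round (y i)) ∈ F} =
      ⋃ x ∈ hF.toFinset, {y : ι → ℝ | (fun i => round (y i)) = x} := by
    ext y; simp
  rw [hU, MeasureTheory.measure_biUnion_finset]
  · rw [Finset.sum_congr rfl (g := fun _ => 1)]
    · simp [Set.ncard_eq_toFinset_card F hF]
    · intro x _
      rw [hcell, MeasureTheory.volume_pi_pi]
      refine Finset.prod_eq_one fun i _ => ?_
      rw [Real.volume_Ico]
      norm_num
  · intro x _ z _ hxz
    refine Set.disjoint_left.2 fun y hy hy' => hxz ?_
    exact hy.symm.trans hy'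
  · intro x _
    rw [hcell]
    exact MeasurableSet.univ_pi fun i => measurableSet_Ico

lemma sq_sum_sub_round_le {ι : Type*} [Fintype ι] (y : ι → ℝ) :
    ∑ i, (y i - round (y i)) ^ 2 ≤ (√(Fintype.card ι) / 2) ^ 2 := by
  have : ∀ i, (y i - round (y i)) ^ 2 ≤ 1 / 4 := fun i => by
    have := abs_le.1 (abs_sub_round (y i))
    nlinarith [this.1, this.2]
  calc _ ≤ ∑ i : ι, (1 / 4 : ℝ) := Finset.sum_le_sum fun i _ => this i
    _ = _ := by
      rw [div_pow, Real.sq_sqrt (by positivity)]; simp; ring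

lemma latBall_ncard_le_vol (ι : Type*) [Fintype ι] {r : ℝ} (hr : 0 ≤ r) :
    ((latBall ι r).ncard : ℝ) ≤
      ballVol (Fintype.card ι) * (r + √(Fintype.card ι) / 2) ^ Fintype.card ι := by
  have hs : 0 ≤ √(Fintype.card ι : ℝ) / 2 := by positivity
  have h1 := volume_round_preimage (latBall ι r) (latBall_finite ι hr)
  have h2 := volume_sq_ball ι (add_nonneg hr hs)
  have h3 : {y : ι → ℝ | (fun i => round (y i)) ∈ latBall ι r} ⊆
      {x : ι → ℝ | ∑ i, x i ^ 2 ≤ (r + √(Fintype.card ι) / 2) ^ 2} := by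
    intro y hy
    have := sq_sum_triangle _ _ hr hs hy (sq_sum_sub_round_le y)
    simpa using this
  have h4 := MeasureTheory.measure_mono (μ := MeasureTheory.volume) h3
  rw [h1, h2, ← ENNReal.ofReal_natCast] at h4
  exact (ENNReal.ofReal_le_ofReal_iff (mul_nonneg (ballVol_pos _).le (by positivity))).1 h4

lemma vol_le_latBall_ncard (ι : Type*) [Fintype ι] {r : ℝ} (hr : √(Fintype.card ι) / 2 ≤ r) :
    ballVol (Fintype.card ι) * (r - √(Fintype.card ι) / 2) ^ Fintype.card ι ≤
      ((latBall ι r).ncard : ℝ) := by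
  have hs : 0 ≤ √(Fintype.card ι : ℝ) / 2 := by positivity
  have h1 := volume_round_preimage (latBall ι r) (latBall_finite ι (hs.trans hr))
  have h2 := volume_sq_ball ι (sub_nonneg.2 hr)
  have h3 : {x : ι → ℝ | ∑ i, x i ^ 2 ≤ (r - √(Fintype.card ι) / 2) ^ 2} ⊆ 
      {y : ι → ℝ | (fun i => round (y i)) ∈ latBall ι r} := by
    intro y hy
    have hh : ∑ i, ((round (y i) : ℝ) - y i) ^ 2 ≤ (√(Fintype.card ι) / 2) ^ 2 := by
      refine le_of_eq_of_le (Finset.sum_congr rfl fun i _ => ?_) (sq_sum_sub_round_le y)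
      ring
    have := sq_sum_triangle _ _ (sub_nonneg.2 hr) hs hy hh
    simpa [latBall] using this
  have h4 := MeasureTheory.measure_mono (μ := MeasureTheory.volume) h3
  rw [h1, h2] at h4
  exact (ENNReal.ofReal_le_natCast).1 h4

/-- Log-convexity of the Gamma function: `Γ(a + 1/2) ≤ √a Γ(a)`. -/
lemma ballVol_le_succ {k n : ℕ} (hkn : k + 1 ≤ n) : ballVol k ≤ √n * ballVol (k + 1) := by
  unfold ballVol
  set a : ℝ := (k : ℝ) / 2 + 1 with ha
  have ha0 : 0 < a := by positivity
  have e : ((k + 1 : ℕ) : ℝ) / 2 + 1 = 1 / 2 * a + 1 / 2 * (a + 1) := by push_cast; rw [ha]; ring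
  have hG := Real.Gamma_mul_add_mul_le_rpow_Gamma_mul_rpow_Gamma ha0 (by linarith : 0 < a + 1)
    (by norm_num : (0 : ℝ) < 1 / 2) (by norm_num : (0 : ℝ) < 1 / 2) (by norm_num)
  rw [← e, Real.Gamma_add_one ha0.ne', ← Real.sqrt_eq_rpow, ← Real.sqrt_eq_rpow,
    ← Real.sqrt_mul (Real.Gamma_pos_of_pos ha0).le] at hG
  have hGa := Real.Gamma_pos_of_pos ha0
  have e2 : √(Real.Gamma a * (a * Real.Gamma a)) = √a * Real.Gamma a := by
    rw [show Real.Gamma a * (a * Real.Gamma a) = a * Real.Gamma a ^ 2 by ring,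
      Real.sqrt_mul ha0.le, Real.sqrt_sq hGa.le]
  rw [e2] at hG
  have hGb : 0 < Real.Gamma (((k + 1 : ℕ) : ℝ) / 2 + 1) := Real.Gamma_pos_of_pos (by positivity)
  have hn : (k : ℝ) + 1 ≤ n := by exact_mod_cast hkn
  have han : a ≤ n := by rw [ha]; linarith [(Nat.cast_nonneg k : (0 : ℝ) ≤ k)]
  have hpi : 1 ≤ √Real.pi := by
    rw [Real.one_le_sqrt]; linarith [Real.pi_gt_three]
  have : Real.Gamma (((k + 1 : ℕ) : ℝ) / 2 + 1) ≤ √n * √Real.pi * Real.Gamma a := by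
    refine hG.trans ?_
    gcongr
    calc √a ≤ √n := Real.sqrt_le_sqrt han
      _ ≤ √n * √Real.pi := le_mul_of_one_le_right (by positivity) hpi
  rw [← mul_div_assoc, div_le_div_iff₀ hGa hGb, pow_succ]
  calc √Real.pi ^ k * Real.Gamma (((k + 1 : ℕ) : ℝ) / 2 + 1)
      ≤ √Real.pi ^ k * (√n * √Real.pi * Real.Gamma a) := by gcongr
    _ = _ := by ring

lemma ballVol_le_pow_mul {k u n : ℕ} (h : k + u ≤ n) : ballVol k ≤ √n ^ u * ballVol (k + u) := by
  induction u with
  | zero => simp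
  | succ u ih =>
    calc ballVol k ≤ √n ^ u * ballVol (k + u) := ih (by omega)
      _ ≤ √n ^ u * (√n * ballVol (k + u + 1)) := by
        gcongr; exact ballVol_le_succ (by omega)
      _ = _ := by rw [pow_succ, add_assoc]; ring

lemma log_succ_sub_log_bounds {s : ℝ} (hs : 0 < s) :
    s * (Real.log (s + 1) - Real.log s) ≤ 1 ∧ 1 ≤ (s + 1) * (Real.log (s + 1) - Real.log s) := by
  have h1 : 0 < s + 1 := by linarith
  have e : Real.log (s + 1) - Real.log s = Real.log ((s + 1) / s) :=
    (Real.log_div h1.ne' hs.ne').symm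
  have hp : 0 < (s + 1) / s := by positivity
  rw [e]
  constructor
  · have := Real.log_le_sub_one_of_pos hp
    calc s * Real.log ((s + 1) / s) ≤ s * ((s + 1) / s - 1) := by gcongr
      _ = 1 := by field_simp; ring
  · have := Real.one_sub_inv_le_log_of_pos hp
    calc (1 : ℝ) = (s + 1) * (1 - ((s + 1) / s)⁻¹) := by field_simp; ring
      _ ≤ _ := by gcongr

/-- One step of the induction behind Stirling's bounds: the ratio of consecutive values of
`(s / e) ^ s` lies between `s` and `s + 1`. -/
lemma stirling_step {s : ℝ} (hs : 0 < s) :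
    ((s + 1) / Real.exp 1) ^ (s + 1) ≤ (s + 1) * (s / Real.exp 1) ^ s ∧
      s * (s / Real.exp 1) ^ s ≤ ((s + 1) / Real.exp 1) ^ (s + 1) := by
  have h1 : 0 < s + 1 := by linarith
  obtain ⟨ha, hb⟩ := log_succ_sub_log_bounds hs
  have e1 : (s / Real.exp 1) ^ s = Real.exp ((Real.log s - 1) * s) := by
    rw [Real.rpow_def_of_pos (by positivity), Real.log_div hs.ne' (Real.exp_ne_zero _),
      Real.log_exp]
  have e2 : ((s + 1) / Real.exp 1) ^ (s + 1) = Real.exp ((Real.log (s + 1) - 1) * (s + 1)) := by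
    rw [Real.rpow_def_of_pos (by positivity), Real.log_div h1.ne' (Real.exp_ne_zero _),
      Real.log_exp]
  rw [e1, e2]
  constructor
  · calc _ ≤ Real.exp (Real.log (s + 1) + (Real.log s - 1) * s) :=
          Real.exp_le_exp.2 (by nlinarith)
      _ = _ := by rw [Real.exp_add, Real.exp_log h1]
  · calc _ = Real.exp (Real.log s + (Real.log s - 1) * s) := by rw [Real.exp_add, Real.exp_log hs]
      _ ≤ _ := Real.exp_le_exp.2 (by nlinarith)

lemma Gamma_step (k : ℕ) :
    Real.Gamma (((k + 2 : ℕ) : ℝ) / 2 + 1) = ((k : ℝ) / 2 + 1) * Real.Gamma ((k : ℝ) / 2 + 1) := by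
  rw [← Real.Gamma_add_one (by positivity)]
  congr 1
  push_cast; ring

lemma Gamma_three_half : Real.Gamma (((1 : ℕ) : ℝ) / 2 + 1) = √Real.pi / 2 := by
  rw [Nat.cast_one, Real.Gamma_add_one (by norm_num), Real.Gamma_one_half_eq]
  ring

/-- Lower Stirling bound `(k / 2e) ^ (k / 2) ≤ Γ(k / 2 + 1)`, by induction in steps of two so that
the recursion of the Gamma function applies. -/
lemma rpow_self_div_exp_le_Gamma (k : ℕ) :
    ((k : ℝ) / 2 / Real.exp 1) ^ ((k : ℝ) / 2) ≤ Real.Gamma ((k : ℝ) / 2 + 1) := by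
  induction k using Nat.twoStepInduction with
  | zero => simp
  | one =>
    rw [Gamma_three_half, Nat.cast_one, ← Real.sqrt_eq_rpow]
    have h1 : √Real.pi ≥ 1 := by
      rw [ge_iff_le, Real.one_le_sqrt]; linarith [Real.pi_gt_three]
    have h2 : √(1 / 2 / Real.exp 1) ≤ 1 / 2 := by
      rw [Real.sqrt_le_left (by norm_num), div_le_iff₀ (Real.exp_pos _)]
      have := Real.exp_one_gt_d9
      linarith
    linarith
  | more k ih _ =>
    rw [Gamma_step]
    have e : ((k + 2 : ℕ) : ℝ) / 2 = (k : ℝ) / 2 + 1 := by push_cast; ring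
    rw [e]
    rcases Nat.eq_zero_or_pos k with rfl | hk
    · have := Real.exp_one_gt_d9
      simp
      exact inv_le_one_of_one_le₀ (by linarith)
    · have hs : (0 : ℝ) < (k : ℝ) / 2 := by positivity
      refine (stirling_step hs).1.trans ?_
      gcongr

/-- Upper Stirling bound for `Γ(k / 2 + 1)`, `k ≥ 1`, with a factor linear in `k`; the index is
shifted because the bound fails at `k = 0`. -/
lemma Gamma_le_rpow_self_div_exp (k : ℕ) :
    Real.Gamma (((k + 1 : ℕ) : ℝ) / 2 + 1) ≤
      5 * (((k + 1 : ℕ) : ℝ) / 2) *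
        (((k + 1 : ℕ) : ℝ) / 2 / Real.exp 1) ^ (((k + 1 : ℕ) : ℝ) / 2) := by
  have he := Real.exp_one_lt_d9
  induction k using Nat.twoStepInduction with
  | zero =>
    rw [zero_add, Gamma_three_half, Nat.cast_one, ← Real.sqrt_eq_rpow]
    have h1 : √Real.pi ≤ 2 := by
      rw [Real.sqrt_le_left (by norm_num)]; linarith [Real.pi_lt_four]
    have h2 : 0.4 ≤ √(1 / 2 / Real.exp 1) := by
      refine Real.le_sqrt_of_sq_le ?_
      rw [le_div_iff₀ (Real.exp_pos _)]
      linarith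
    linarith
  | one =>
    have e : (((1 + 1 : ℕ) : ℝ) / 2) = 1 := by norm_num
    rw [e, Real.rpow_one, Real.Gamma_add_one (by norm_num), Real.Gamma_one, ← mul_div_assoc,
      le_div_iff₀ (Real.exp_pos _)]
    linarith
  | more k ih _ =>
    rw [show k + 2 + 1 = k + 1 + 2 by ring, Gamma_step]
    set s : ℝ := ((k + 1 : ℕ) : ℝ) / 2 with hs
    have e : ((k + 1 + 2 : ℕ) : ℝ) / 2 = s + 1 := by rw [hs]; push_cast; ring
    rw [e]
    have hs0 : 0 < s := by positivity
    calc (s + 1) * Real.Gamma (s + 1) ≤ (s + 1) * (5 * s * (s / Real.exp 1) ^ s) := by gcongr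
      _ = 5 * (s + 1) * (s * (s / Real.exp 1) ^ s) := by ring
      _ ≤ _ := by gcongr; exact (stirling_step hs0).2

lemma ballVol_mul_pow_eq (n : ℕ) (q : ℝ) :
    ballVol n * (√n * q / √(2 * Real.pi * Real.exp 1)) ^ n =
      q ^ n * ((n : ℝ) / 2 / Real.exp 1) ^ ((n : ℝ) / 2) / Real.Gamma ((n : ℝ) / 2 + 1) := by
  have h : √((n : ℝ) / 2 / Real.exp 1) = √Real.pi * √n / √(2 * Real.pi * Real.exp 1) := by
    rw [← Real.sqrt_mul Real.pi_pos.le, ← Real.sqrt_div' _ (by positivity)]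
    congr 1
    field_simp
  have h2 : ((n : ℝ) / 2 / Real.exp 1) ^ ((n : ℝ) / 2) = √((n : ℝ) / 2 / Real.exp 1) ^ n := by
    rw [Real.sqrt_eq_rpow, ← Real.rpow_natCast, ← Real.rpow_mul (by positivity)]
    congr 1; ring
  rw [h2, h, ballVol, div_mul_eq_mul_div, ← mul_pow, ← mul_pow]
  congr 2; ring

/-- Stirling upper bound for the volume of a ball whose radius is written as a multiple `q` of
`√(n / 2πe)`. -/
lemma ballVol_mul_pow_le (n : ℕ) {q : ℝ} (hq : 0 ≤ q) :
    ballVol n * (√n * q / √(2 * Real.pi * Real.exp 1)) ^ n ≤ q ^ n := by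
  rw [ballVol_mul_pow_eq, div_le_iff₀ (Real.Gamma_pos_of_pos (by positivity))]
  have := rpow_self_div_exp_le_Gamma n
  gcongr

/-- Stirling lower bound matching `ballVol_mul_pow_le` up to a polynomial factor. -/
lemma le_ballVol_mul_pow (n : ℕ) (hn : 1 ≤ n) {q : ℝ} (hq : 0 ≤ q) :
    q ^ n / (5 * n) ≤ ballVol n * (√n * q / √(2 * Real.pi * Real.exp 1)) ^ n := by
  have hn' : (0 : ℝ) < n := by exact_mod_cast hn
  rw [ballVol_mul_pow_eq, div_le_div_iff₀ (by positivity)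
    (Real.Gamma_pos_of_pos (by positivity))]
  obtain ⟨k, rfl⟩ : ∃ k, n = k + 1 := ⟨n - 1, by omega⟩
  have := Gamma_le_rpow_self_div_exp k
  have hx : 0 ≤ (((k + 1 : ℕ) : ℝ) / 2 / Real.exp 1) ^ (((k + 1 : ℕ) : ℝ) / 2) := by positivity
  calc _ ≤ q ^ (k + 1) * (5 * (((k + 1 : ℕ) : ℝ) / 2) *
        (((k + 1 : ℕ) : ℝ) / 2 / Real.exp 1) ^ (((k + 1 : ℕ) : ℝ) / 2)) := by gcongr
    _ = q ^ (k + 1) * (((k + 1 : ℕ) : ℝ) / 2 / Real.exp 1) ^ (((k + 1 : ℕ) : ℝ) / 2) *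
        (5 * ((k + 1 : ℕ) : ℝ)) / 2 := by ring
    _ ≤ _ := by
      refine div_le_self (by positivity) (by norm_num)

/-- Lattice points of a ball with the coordinates in `U` prescribed modulo `p`: as the radius is
below `p / 2`, they inject into the ball of the remaining coordinates. -/
lemma slice_ncard_le {n : ℕ} {p : ℕ} {r : ℝ} (hr : 0 ≤ r) (hrp : 2 * r < p) (U : Finset (Fin n))
    (z : Fin n → ZMod p) (Y : Finset (Fin n → ℤ)) (hY : ∀ y ∈ Y, y ∈ latBall (Fin n) r)
    (hz : ∀ y ∈ Y, ∀ j ∈ U, ((y j : ℤ) : ZMod p) = z j) :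
    (Y.card : ℝ) ≤ ((latBall {j // j ∉ U} r).ncard : ℝ) := by
  have := Set.ncard_le_ncard_of_injOn (s := (Y : Set (Fin n → ℤ))) (t := latBall {j // j ∉ U} r)
    (fun y j => y j.1) ?_ ?_ (latBall_finite _ hr)
  · rw [Set.ncard_coe_finset] at this
    exact_mod_cast this
  · intro y hy
    have h := hY y hy
    simp only [latBall, Set.mem_ofPred_eq] at h ⊢
    refine le_trans ?_ h
    rw [← Finset.sum_subtype (Finset.univ.filter fun j => j ∉ U) (by simp)
      (fun j => (y j : ℝ) ^ 2)]
    exact Finset.sum_le_sum_of_subset_of_nonneg (Finset.subset_univ _)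
      fun i _ _ => sq_nonneg _
  · intro y hy y' hy' heq
    ext j
    by_cases hj : j ∈ U
    · have h1 := (hz y hy j hj).trans (hz y' hy' j hj).symm
      rw [ZMod.intCast_eq_intCast_iff_dvd_sub] at h1
      have a1 := abs_le.1 (abs_le_of_mem_latBall hr (hY y hy) j)
      have a2 := abs_le.1 (abs_le_of_mem_latBall hr (hY y' hy') j)
      have h3 : |y' j - y j| < (p : ℤ) := by
        have : |((y' j : ℝ) - y j)| < p := by rw [abs_lt]; constructor <;> linarith
        exact_mod_cast this
      have := Int.eq_zero_of_abs_lt_dvd h1 h3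
      linarith
    · exact congrFun heq ⟨j, hj⟩

lemma card_not_mem {n : ℕ} (U : Finset (Fin n)) : Fintype.card {j // j ∉ U} = n - U.card := by
  rw [Fintype.card_subtype_compl]; simp

/-- Volume majorant for the slices of a ball: every prescribed coordinate costs a factor `κ`. -/
lemma slice_le_vol {n : ℕ} {r κ : ℝ} (hr : 0 ≤ r) (U : Finset (Fin n))
    (hκ : √n ≤ κ * r) (hκ0 : 0 ≤ κ) :
    ((latBall {j // j ∉ U} r).ncard : ℝ) ≤ ballVol n * (r + √n / 2) ^ n * κ ^ U.card := by
  refine (latBall_ncard_le_vol _ hr).trans ?_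
  rw [card_not_mem]
  have hu : U.card ≤ n := by simpa using U.card_le_univ
  have h1 : ballVol (n - U.card) ≤ √n ^ U.card * ballVol n := by
    have := ballVol_le_pow_mul (k := n - U.card) (u := U.card) (n := n) (by omega)
    rwa [Nat.sub_add_cancel hu] at this
  have h2 : √((n - U.card : ℕ) : ℝ) ≤ √n := Real.sqrt_le_sqrt (by exact_mod_cast Nat.sub_le _ _)
  calc _ ≤ (√n ^ U.card * ballVol n) * (r + √n / 2) ^ (n - U.card) := by
        gcongr
        exact mul_nonneg (by positivity) (ballVol_pos n).le
    _ ≤ ((κ * (r + √n / 2)) ^ U.card * ballVol n) * (r + √n / 2) ^ (n - U.card) := by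
        have := (ballVol_pos n).le
        gcongr
        refine hκ.trans ?_
        gcongr
        linarith [Real.sqrt_nonneg (n : ℝ)]
    _ = ballVol n * ((r + √n / 2) ^ (n - U.card) * (r + √n / 2) ^ U.card) * κ ^ U.card := by
        rw [mul_pow]; ring
    _ = _ := by rw [← pow_add, Nat.sub_add_cancel hu]

/-! ### Expansion and labelled checks -/

open Classical in
/-- Check nodes adjacent to a set `S` of variable nodes. -/
noncomputable def varNbr {m n : ℕ} (H : Matrix (Fin m) (Fin n) Bool) (S : Finset (Fin n)) : Finset (Fin m) :=
  Finset.univ.filter fun i => ∃ j ∈ S, H i j = true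

open Classical in
/-- Variable nodes adjacent to a set `T` of check nodes. -/
noncomputable def checkNbr {m n : ℕ} (H : Matrix (Fin m) (Fin n) Bool) (T : Finset (Fin m)) : Finset (Fin n) :=
  Finset.univ.filter fun j => ∃ i ∈ T, H i j = true

lemma varNbr_mono {m n : ℕ} (H : Matrix (Fin m) (Fin n) Bool) {S S' : Finset (Fin n)}
    (h : S ⊆ S') : varNbr H S ⊆ varNbr H S' := by
  intro i hi
  simp only [varNbr, Finset.mem_filter, Finset.mem_univ, true_and] at hi ⊢
  obtain ⟨j, hj, hH⟩ := hi
  exact ⟨j, h hj, hH⟩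

lemma checkNbr_mono {m n : ℕ} (H : Matrix (Fin m) (Fin n) Bool) {T T' : Finset (Fin m)}
    (h : T ⊆ T') : checkNbr H T ⊆ checkNbr H T' := by
  intro i hi
  simp only [checkNbr, Finset.mem_filter, Finset.mem_univ, true_and] at hi ⊢
  obtain ⟨j, hj, hH⟩ := hi
  exact ⟨j, h hj, hH⟩

/-- `TannerDGood` phrased with finsets. -/
def FinGood {m n : ℕ} (H : Matrix (Fin m) (Fin n) Bool) (f D : ℝ) : Prop :=
  (∀ S : Finset (Fin n), (S.card : ℝ) ≤ n / (D + 1) → f * D * S.card ≤ (varNbr H S).card) ∧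
  (∀ T : Finset (Fin m), (T.card : ℝ) ≤ f * n / (D + 1) → D * T.card / f ≤ (checkNbr H T).card)

lemma TannerDGood.finGood {m n : ℕ} {H : Matrix (Fin m) (Fin n) Bool} {f D : ℝ}
    (h : TannerDGood H f D) : FinGood H f D := by
  constructor
  · intro S hS
    have := h.1 (S : Set (Fin n)) (by rwa [Set.ncard_coe_finset])
    rw [Set.ncard_coe_finset] at this
    convert this
    rw [← Set.ncard_coe_finset]
    congr 1
    ext i; simp [varNbr]
  · intro S hS
    have := h.2 (S : Set (Fin m)) (by rwa [Set.ncard_coe_finset])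
    rw [Set.ncard_coe_finset] at this
    convert this
    rw [← Set.ncard_coe_finset]
    congr 1
    ext i; simp [checkNbr]

/-- Check sets beyond the expansion range still have almost `Dn/(D+1)` neighbours. -/
lemma FinGood.big_checkNbr {m n : ℕ} {H : Matrix (Fin m) (Fin n) Bool} {f D : ℝ}
    (h : FinGood H f D) (hf : 0 < f) (hD : 0 < D) (T : Finset (Fin m))
    (hT : f * n / (D + 1) < T.card) :
    D * n / (D + 1) - D / f ≤ (checkNbr H T).card := by
  have h0 : 0 ≤ f * n / (D + 1) := by positivity
  obtain ⟨T', hT', hc⟩ := Finset.exists_subset_card_eq (s := T) (n := ⌊f * n / (D + 1)⌋₊) (by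
    have := Nat.floor_le h0
    exact_mod_cast this.trans hT.le)
  have h1 := h.2 T' (by rw [hc]; exact Nat.floor_le h0)
  have h2 : ((checkNbr H T').card : ℝ) ≤ (checkNbr H T).card := by
    exact_mod_cast Finset.card_le_card (checkNbr_mono H hT')
  refine le_trans ?_ (h1.trans h2)
  rw [hc]
  have h3 : f * n / (D + 1) - 1 ≤ (⌊f * n / (D + 1)⌋₊ : ℝ) := by
    linarith [Nat.lt_floor_add_one (f * n / (D + 1))]
  calc D * n / (D + 1) - D / f = D * (f * n / (D + 1) - 1) / f := by field_simp
    _ ≤ _ := by gcongr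

/-- Slightly beyond the expansion range of variable sets the loss is a bounded power of `p`, which
is absorbed by the factor `2 ^ |S|`. -/
lemma FinGood.varNbr_weight {m n : ℕ} {H : Matrix (Fin m) (Fin n) Bool} {f D : ℝ}
    (h : FinGood H f D) (hf : 0 < f) (hD : 0 < D) {P : ℝ} (hP : 1 ≤ P)
    (h2 : P ^ (D ^ 2 + f * D) ≤ 2 ^ ((n : ℝ) / (D + 1)))
    (S : Finset (Fin n)) (hS : (S.card : ℝ) ≤ n / (D + 1) + D / f) :
    (P ^ (varNbr H S).card)⁻¹ ≤ (2 * P ^ (-(f * D))) ^ S.card := by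
  have hP0 : 0 < P := by linarith
  have e1 : (P ^ (-(f * D))) ^ S.card = P ^ (-(f * D * S.card)) := by
    rw [← Real.rpow_natCast, ← Real.rpow_mul hP0.le]; congr 1; ring
  have e2 : (P ^ (varNbr H S).card)⁻¹ = P ^ (-((varNbr H S).card : ℝ)) := by
    rw [Real.rpow_neg hP0.le, Real.rpow_natCast]
  rw [mul_pow, e1, e2]
  by_cases hc : (S.card : ℝ) ≤ n / (D + 1)
  · have h1 := h.1 S hc
    calc P ^ (-((varNbr H S).card : ℝ)) ≤ P ^ (-(f * D * S.card)) :=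
          Real.rpow_le_rpow_of_exponent_le hP (by linarith)
      _ ≤ _ := le_mul_of_one_le_left (by positivity) (one_le_pow₀ (by norm_num))
  · push Not at hc
    have h0 : 0 ≤ (n : ℝ) / (D + 1) := by positivity
    obtain ⟨S', hS', hc'⟩ := Finset.exists_subset_card_eq (s := S) (n := ⌊n / (D + 1)⌋₊) (by
      have := Nat.floor_le h0
      exact_mod_cast this.trans hc.le)
    have h1 := h.1 S' (by rw [hc']; exact Nat.floor_le h0)
    have h3 : ((varNbr H S').card : ℝ) ≤ (varNbr H S).card := by
      exact_mod_cast Finset.card_le_card (varNbr_mono H hS')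
    have h4 : (S.card : ℝ) - D / f - 1 ≤ S'.card := by
      rw [hc']; linarith [Nat.lt_floor_add_one ((n : ℝ) / (D + 1))]
    have h5 : f * D * S.card - (D ^ 2 + f * D) ≤ (varNbr H S).card := by
      refine le_trans ?_ (h1.trans h3)
      calc f * D * S.card - (D ^ 2 + f * D) = f * D * (S.card - D / f - 1) := by field_simp; ring
        _ ≤ _ := by gcongr
    calc P ^ (-((varNbr H S).card : ℝ)) ≤ P ^ ((D ^ 2 + f * D) + -(f * D * S.card)) :=
          Real.rpow_le_rpow_of_exponent_le hP (by linarith)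
      _ = P ^ (D ^ 2 + f * D) * P ^ (-(f * D * S.card)) := Real.rpow_add hP0 _ _
      _ ≤ 2 ^ S.card * P ^ (-(f * D * S.card)) := by
        gcongr
        refine h2.trans ?_
        rw [← Real.rpow_natCast]
        exact Real.rpow_le_rpow_of_exponent_le (by norm_num) hc.le

/-- Sum over vectors of `p` to the number of labelled checks. The label `c` of a check certifies
that `y = c x` on its neighbourhood. By expansion, a labelling with `t` labels prescribes at least
`D t / f` coordinates, so it contributes `Q (p κ^(D/f))^t`; summing over all labellings gives a
product over the checks. -/
lemma labelled_sum_le {m n p : ℕ} {H : Matrix (Fin m) (Fin n) Bool} {f D : ℝ}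
    [Fact p.Prime] (h : FinGood H f D)
    (x : Fin n → ZMod p) (hx : ∀ j, x j ≠ 0) (L : Finset (ZMod p)) (V : Finset (Fin n))
    (Y : Finset (Fin n → ℤ)) (τ : (Fin n → ℤ) → Fin m → Option (ZMod p))
    (hτ : ∀ y ∈ Y, ∀ i c, τ y i = some c →
      c ∈ L ∧ ∀ j, H i j = true → j ∈ V ∧ ((y j : ℤ) : ZMod p) = c * x j)
    (hsmall : ∀ y ∈ Y, ∀ c,
      ((Finset.univ.filter fun i => τ y i = some c).card : ℝ) ≤ f * n / (D + 1))
    {Q κ : ℝ} (hQ0 : 0 ≤ Q) (hκ0 : 0 < κ) (hκ1 : κ ≤ 1)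
    (hQ : ∀ U ⊆ V, ∀ z : Fin n → ZMod p, ∀ Y' ⊆ Y,
      (∀ y ∈ Y', ∀ j ∈ U, ((y j : ℤ) : ZMod p) = z j) → (Y'.card : ℝ) ≤ Q * κ ^ U.card) :
    ∑ y ∈ Y, (p : ℝ) ^ (Finset.univ.filter fun i => τ y i ≠ none).card ≤
      Q * (1 + L.card * (p * κ ^ (D / f))) ^ m := by
  classical
  set g : ℝ := p * κ ^ (D / f) with hg
  have hg0 : 0 ≤ g := by positivity
  let Ω : Finset (Fin m → Option (ZMod p)) := Fintype.piFinset fun _ => Finset.insertNone L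
  have hmaps : ∀ y ∈ Y, τ y ∈ Ω := by
    intro y hy
    simp only [Ω, Fintype.mem_piFinset, Finset.mem_insertNone]
    intro i c hc
    exact (hτ y hy i c hc).1
  rw [← Finset.sum_fiberwise_of_maps_to hmaps]
  have key : ∀ σ ∈ Ω, ∑ y ∈ Y with τ y = σ,
      (p : ℝ) ^ (Finset.univ.filter fun i => τ y i ≠ none).card ≤
      Q * ∏ i, (if σ i = none then (1 : ℝ) else g) := by
    intro σ _
    have hprod : ∏ i, (if σ i = none then (1 : ℝ) else g) =
        g ^ (Finset.univ.filter fun i => σ i ≠ none).card := by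
      rw [Finset.prod_ite]; simp
    rw [hprod]
    set t := (Finset.univ.filter fun i => σ i ≠ none).card with ht
    have hsum : ∑ y ∈ Y with τ y = σ,
        (p : ℝ) ^ (Finset.univ.filter fun i => τ y i ≠ none).card =
        ((Y.filter fun y => τ y = σ).card : ℝ) * (p : ℝ) ^ t := by
      rw [Finset.sum_congr rfl (g := fun _ => (p : ℝ) ^ t), Finset.sum_const, nsmul_eq_mul]
      intro y hy
      rw [(Finset.mem_filter.1 hy).2]
    rw [hsum]
    rcases (Y.filter fun y => τ y = σ).eq_empty_or_nonempty with he | ⟨y0, hy0⟩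
    · rw [he]; simp; positivity
    obtain ⟨hy0Y, hy0σ⟩ := Finset.mem_filter.1 hy0
    let T : ZMod p → Finset (Fin m) := fun c => Finset.univ.filter fun i => σ i = some c
    let U : Finset (Fin n) := L.biUnion fun c => checkNbr H (T c)
    have hU : ∀ j ∈ U, ∃ c i, σ i = some c ∧ H i j = true := by
      intro j hj
      simp only [U, T, checkNbr, Finset.mem_biUnion, Finset.mem_filter, Finset.mem_univ,
        true_and] at hj
      obtain ⟨c, _, i, hi, hij⟩ := hj
      exact ⟨c, i, hi, hij⟩
    have hcount : ((Y.filter fun y => τ y = σ).card : ℝ) ≤ Q * κ ^ U.card := by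
      refine hQ U ?_ (fun j => ((y0 j : ℤ) : ZMod p)) _ (Finset.filter_subset _ _) ?_
      · intro j hj
        obtain ⟨c, i, hi, hij⟩ := hU j hj
        exact ((hτ y0 hy0Y i c (by rw [hy0σ, hi])).2 j hij).1
      · intro y hy j hj
        obtain ⟨hyY, hyσ⟩ := Finset.mem_filter.1 hy
        obtain ⟨c, i, hi, hij⟩ := hU j hj
        rw [((hτ y hyY i c (by rw [hyσ, hi])).2 j hij).2,
          ((hτ y0 hy0Y i c (by rw [hy0σ, hi])).2 j hij).2]
    have hdisj : U.card = ∑ c ∈ L, (checkNbr H (T c)).card := by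
      refine Finset.card_biUnion ?_
      intro c _ c' _ hcc
      refine Finset.disjoint_left.2 fun j hj hj' => hcc ?_
      simp only [T, checkNbr, Finset.mem_filter, Finset.mem_univ, true_and] at hj hj'
      obtain ⟨i, hi, hij⟩ := hj
      obtain ⟨i', hi', hij'⟩ := hj'
      have a1 := ((hτ y0 hy0Y i c (by rw [hy0σ, hi])).2 j hij).2
      have a2 := ((hτ y0 hy0Y i' c' (by rw [hy0σ, hi'])).2 j hij').2
      exact mul_right_cancel₀ (hx j) (a1.symm.trans a2)
    have htsum : t = ∑ c ∈ L, (T c).card := by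
      rw [ht, ← Finset.card_biUnion]
      · congr 1
        ext i
        simp only [T, Finset.mem_filter, Finset.mem_univ, true_and, Finset.mem_biUnion]
        constructor
        · intro hi
          obtain ⟨c, hc⟩ := Option.ne_none_iff_exists'.1 hi
          exact ⟨c, (hτ y0 hy0Y i c (by rw [hy0σ, hc])).1, hc⟩
        · rintro ⟨c, _, hc⟩
          simp [hc]
      · intro c _ c' _ hcc
        refine Finset.disjoint_left.2 fun i hi hi' => hcc ?_
        simp only [T, Finset.mem_filter, Finset.mem_univ, true_and] at hi hi'
        exact Option.some_injective _ (hi.symm.trans hi')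
    have hUt : D / f * t ≤ U.card := by
      rw [hdisj, htsum]
      push_cast
      rw [Finset.mul_sum]
      refine Finset.sum_le_sum fun c _ => ?_
      have := h.2 (T c) (by have := hsmall y0 hy0Y c; rwa [hy0σ] at this)
      calc D / f * ((T c).card : ℝ) = D * (T c).card / f := by ring
        _ ≤ _ := this
    have hκU : κ ^ U.card ≤ (κ ^ (D / f)) ^ t := by
      rw [← Real.rpow_natCast, ← Real.rpow_natCast, ← Real.rpow_mul hκ0.le]
      exact Real.rpow_le_rpow_of_exponent_ge hκ0 hκ1 hUt
    calc ((Y.filter fun y => τ y = σ).card : ℝ) * (p : ℝ) ^ t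
        ≤ (Q * (κ ^ (D / f)) ^ t) * (p : ℝ) ^ t := by
          gcongr
          exact hcount.trans (by gcongr)
      _ = Q * g ^ t := by rw [hg, mul_pow]; ring
  refine (Finset.sum_le_sum key).trans (le_of_eq ?_)
  rw [← Finset.mul_sum]
  congr 1
  have hps := Finset.prod_univ_sum (fun _ : Fin m => Finset.insertNone L)
    (fun _ (o : Option (ZMod p)) => if o = none then (1 : ℝ) else g)
  change ∑ σ ∈ Fintype.piFinset (fun _ => Finset.insertNone L), _ = _
  rw [← hps]
  simp [Finset.sum_insertNone]

/-! ### Weighted count of parallel checks -/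

open Classical in
/-- Number of parallel checks: those on whose neighbourhood `y` is congruent to `c x` for some `c ∈ L`. -/
noncomputable def parCount {m n p : ℕ} (H : Matrix (Fin m) (Fin n) Bool) (x : Fin n → ZMod p)
    (L : Finset (ZMod p)) (y : Fin n → ℤ) : ℕ :=
  (Finset.univ.filter fun i : Fin m =>
    ∃ c ∈ L, ∀ j, H i j = true → ((y j : ℤ) : ZMod p) = c * x j).card

lemma sum_biUnion_le {α β : Type*} [DecidableEq α] [DecidableEq β] (s : Finset α)
    (t : α → Finset β) {w : β → ℝ} (hw : ∀ b, 0 ≤ w b) :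
    ∑ b ∈ s.biUnion t, w b ≤ ∑ a ∈ s, ∑ b ∈ t a, w b := by
  induction s using Finset.induction_on with
  | empty => simp
  | insert a s ha ih =>
    rw [Finset.biUnion_insert, Finset.sum_insert ha]
    have := Finset.sum_union_inter (s₁ := t a) (s₂ := s.biUnion t) (f := w)
    have h0 : 0 ≤ ∑ b ∈ t a ∩ s.biUnion t, w b := Finset.sum_nonneg fun b _ => hw b
    linarith

set_option maxHeartbeats 2000000 in
/-- The central estimate. Either all the sets of checks with a common ratio `c` are within the
expansion range, and `labelled_sum_le` applies with the volume of the ball as majorant; or one of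
them is large, and then `y = c x` off a small nonempty set `S`, the checks meeting `S` are numerous
by expansion, and the lattice points supported on `S` are counted crudely by a cube. -/
lemma parCount_sum_le {m n p : ℕ} {H : Matrix (Fin m) (Fin n) Bool} {f D : ℝ}
    [Fact p.Prime] (h : FinGood H f D) (hf : 0 < f) (hD : 0 < D)
    (h2 : (p : ℝ) ^ (D ^ 2 + f * D) ≤ 2 ^ ((n : ℝ) / (D + 1)))
    (h3 : 2 * ((n : ℝ) / (D + 1) + D / f) < n)
    (x : Fin n → ZMod p) (hx : ∀ j, x j ≠ 0) (L : Finset (ZMod p))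
    {r κ : ℝ} (hr : 0 ≤ r) (hrp : 2 * r < p) (hκ0 : 0 < κ) (hκ1 : κ ≤ 1) (hκ : √n ≤ κ * r)
    (hκ' : 1 ≤ κ * (2 * r + 1))
    (Y : Finset (Fin n → ℤ)) (hY : ∀ y ∈ Y, y ∈ latBall (Fin n) r)
    (hne : ∀ y ∈ Y, ∀ c ∈ L, ∃ j, ((y j : ℤ) : ZMod p) ≠ c * x j) :
    ∑ y ∈ Y, (p : ℝ) ^ parCount H x L y ≤
      (ballVol n * (r + √n / 2) ^ n + L.card * (p : ℝ) ^ m *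
          ((1 + (2 * r + 1) * (2 * (p : ℝ) ^ (-(f * D)))) ^ n - 1)) *
        (1 + L.card * (p * κ ^ (D / f))) ^ m := by
  classical
  have hp1 : (1 : ℝ) ≤ p := by exact_mod_cast (Fact.out : p.Prime).one_lt.le
  set G : ℝ := (1 + L.card * (p * κ ^ (D / f))) ^ m with hG
  have hG0 : 0 ≤ G := by positivity
  let τ : (Fin n → ℤ) → Fin m → Option (ZMod p) := fun y i =>
    if hh : ∃ c ∈ L, ∀ j, H i j = true → ((y j : ℤ) : ZMod p) = c * x j then some hh.choose
    else none
  have hτsome : ∀ y i c, τ y i = some c →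
      c ∈ L ∧ ∀ j, H i j = true → ((y j : ℤ) : ZMod p) = c * x j := by
    intro y i c hc
    simp only [τ] at hc
    split_ifs at hc with hh
    rw [← Option.some_injective _ hc]
    exact hh.choose_spec
  have hcnt : ∀ y, parCount H x L y = (Finset.univ.filter fun i => τ y i ≠ none).card := by
    intro y
    unfold parCount
    congr 1
    ext i
    simp only [Finset.mem_filter, Finset.mem_univ, true_and, τ]
    split_ifs with hh <;> simp [hh]
  let small : (Fin n → ℤ) → Prop := fun y => ∀ c,
    ((Finset.univ.filter fun i => τ y i = some c).card : ℝ) ≤ f * n / (D + 1)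
  rw [← Finset.sum_filter_add_sum_filter_not Y small, add_mul]
  refine add_le_add ?_ ?_
  · -- all label classes within the expansion range
    have := labelled_sum_le h x hx L Finset.univ (Y.filter small) τ
      (fun y _ i c hc => ⟨(hτsome y i c hc).1, fun j hj =>
        ⟨Finset.mem_univ _, (hτsome y i c hc).2 j hj⟩⟩)
      (fun y hy => (Finset.mem_filter.1 hy).2)
      (Q := ballVol n * (r + √n / 2) ^ n) (κ := κ)
      (mul_nonneg (ballVol_pos n).le (by positivity)) hκ0 hκ1
      (fun U _ z Y' hY' hz => (slice_ncard_le hr hrp U z Y'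
        (fun y hy => hY y (Finset.mem_of_mem_filter y (hY' hy))) hz).trans
          (slice_le_vol hr U hκ hκ0.le))
    rw [Finset.sum_congr rfl fun y _ => by rw [hcnt y]]
    exact this
  · -- one large label class `c`; `S` is the set where `y` differs from `c x`
    let big : ZMod p → (Fin n → ℤ) → Prop := fun c y =>
      f * n / (D + 1) < ((Finset.univ.filter fun i => τ y i = some c).card : ℝ)
    let S : ZMod p → (Fin n → ℤ) → Finset (Fin n) := fun c y =>
      Finset.univ.filter fun j => ((y j : ℤ) : ZMod p) ≠ c * x j
    let N : Finset (Finset (Fin n)) := Finset.univ.powerset.erase ∅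
    set b : ℝ := (2 * r + 1) * (2 * (p : ℝ) ^ (-(f * D))) with hb
    have hb0 : 0 ≤ b := by positivity
    have hclass_disj : ∀ c y, Disjoint
        (checkNbr H (Finset.univ.filter fun i => τ y i = some c)) (S c y) := by
      intro c y
      refine Finset.disjoint_left.2 fun j hj hj' => ?_
      simp only [checkNbr, S, Finset.mem_filter, Finset.mem_univ, true_and] at hj hj'
      obtain ⟨i, hi, hij⟩ := hj
      exact hj' ((hτsome y i c hi).2 j hij)
    have hSsmall : ∀ c y, big c y → ((S c y).card : ℝ) ≤ n / (D + 1) + D / f := by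
      intro c y hbig
      have h1 := h.big_checkNbr hf hD _ hbig
      have h4 := Finset.card_le_univ
        ((checkNbr H (Finset.univ.filter fun i => τ y i = some c)).disjUnion (S c y)
          (hclass_disj c y))
      rw [Finset.card_disjUnion, Fintype.card_fin] at h4
      have h5 : ((checkNbr H (Finset.univ.filter fun i => τ y i = some c)).card : ℝ) +
          (S c y).card ≤ n := by exact_mod_cast h4
      have h6 : D * n / (D + 1) = n - n / (D + 1) := by field_simp; ring
      linarith
    have hbig_unique : ∀ c c' y, big c y → big c' y → c = c' := by
      intro c c' y hc hc'
      by_contra hcc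
      have h1 := h.big_checkNbr hf hD _ hc
      have h1' := h.big_checkNbr hf hD _ hc'
      have hdis : Disjoint (checkNbr H (Finset.univ.filter fun i => τ y i = some c))
          (checkNbr H (Finset.univ.filter fun i => τ y i = some c')) := by
        refine Finset.disjoint_left.2 fun j hj hj' => hcc ?_
        simp only [checkNbr, Finset.mem_filter, Finset.mem_univ, true_and] at hj hj'
        obtain ⟨i, hi, hij⟩ := hj
        obtain ⟨i', hi', hij'⟩ := hj'
        exact mul_right_cancel₀ (hx j)
          (((hτsome y i c hi).2 j hij).symm.trans ((hτsome y i' c' hi').2 j hij'))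
      have h4 := Finset.card_le_univ (Finset.disjUnion _ _ hdis)
      rw [Finset.card_disjUnion, Fintype.card_fin] at h4
      have h5 : ((checkNbr H (Finset.univ.filter fun i => τ y i = some c)).card : ℝ) +
          (checkNbr H (Finset.univ.filter fun i => τ y i = some c')).card ≤ n := by
        exact_mod_cast h4
      have h6 : D * n / (D + 1) = n - n / (D + 1) := by field_simp; ring
      linarith
    -- the contribution of a fixed pair `(c, S)`
    have hpair : ∀ c ∈ L, ∀ S0 ∈ N,
        ∑ y ∈ Y.filter (fun y => big c y ∧ S c y = S0), (p : ℝ) ^ parCount H x L y ≤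
          (p : ℝ) ^ m * b ^ S0.card * G := by
      intro c _ S0 _
      rcases (Y.filter (fun y => big c y ∧ S c y = S0)).eq_empty_or_nonempty with he | ⟨y0, hy0⟩
      · rw [he]; simp; positivity
      have hS0 : (S0.card : ℝ) ≤ n / (D + 1) + D / f := by
        obtain ⟨_, hbig, hS⟩ := Finset.mem_filter.1 hy0
        rw [← hS]; exact hSsmall c y0 hbig
      let τ' : (Fin n → ℤ) → Fin m → Option (ZMod p) := fun y i =>
        if i ∈ varNbr H S0 then τ y i else none
      have hτ' : ∀ y i c', τ' y i = some c' → i ∈ varNbr H S0 ∧ τ y i = some c' := by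
        intro y i c' hc'
        simp only [τ'] at hc'
        split_ifs at hc' with hi
        exact ⟨hi, hc'⟩
      have hτ'ne : ∀ y ∈ Y.filter (fun y => big c y ∧ S c y = S0), ∀ i c', τ' y i = some c' →
          c' ≠ c := by
        intro y hy i c' hc' hcc
        obtain ⟨_, _, hS⟩ := Finset.mem_filter.1 hy
        obtain ⟨hi, hc2⟩ := hτ' y i c' hc'
        simp only [varNbr, Finset.mem_filter, Finset.mem_univ, true_and] at hi
        obtain ⟨j, hj, hij⟩ := hi
        rw [← hS] at hj
        have := (Finset.mem_filter.1 hj).2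
        rw [hcc] at hc2
        exact this ((hτsome y i c hc2).2 j hij)
      have hlab := labelled_sum_le h x hx L S0 (Y.filter (fun y => big c y ∧ S c y = S0)) τ'
        (by
          intro y hy i c' hc'
          have hcc := hτ'ne y hy i c' hc'
          obtain ⟨_, _, hS⟩ := Finset.mem_filter.1 hy
          obtain ⟨_, hc2⟩ := hτ' y i c' hc'
          refine ⟨(hτsome y i c' hc2).1, fun j hj => ?_⟩
          have hj2 := (hτsome y i c' hc2).2 j hj
          refine ⟨?_, hj2⟩
          rw [← hS]
          refine Finset.mem_filter.2 ⟨Finset.mem_univ _, ?_⟩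
          rw [hj2]
          exact fun hE => hcc (mul_right_cancel₀ (hx j) hE))
        (by
          intro y hy c'
          by_contra hcon
          push Not at hcon
          obtain ⟨_, hbig, _⟩ := Finset.mem_filter.1 hy
          have hsub : (Finset.univ.filter fun i => τ' y i = some c') ⊆
              (Finset.univ.filter fun i => τ y i = some c') := by
            intro i hi
            simp only [Finset.mem_filter, Finset.mem_univ, true_and] at hi ⊢
            exact (hτ' y i c' hi).2
          have hbig' : big c' y := lt_of_lt_of_le hcon
            (by exact_mod_cast Finset.card_le_card hsub)
          have hcc := hbig_unique c c' y hbig hbig'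
          have hpos : (0 : ℝ) < ((Finset.univ.filter fun i => τ' y i = some c').card : ℝ) :=
            lt_of_le_of_lt (by positivity) hcon
          obtain ⟨i, hi⟩ := Finset.card_pos.1 (by exact_mod_cast hpos)
          exact hτ'ne y hy i c' (Finset.mem_filter.1 hi).2 hcc.symm)
        (Q := (2 * r + 1) ^ S0.card) (κ := κ) (by positivity) hκ0 hκ1
        (by
          intro U hU z Y' hY' hz
          have hc1 := slice_ncard_le hr hrp (U ∪ S0ᶜ) (fun j => if j ∈ U then z j else c * x j) Y'
            (fun y hy => hY y (Finset.mem_of_mem_filter y (hY' hy))) (by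
              intro y hy j hj
              by_cases hjU : j ∈ U
              · simp only [hjU, if_true]; exact hz y hy j hjU
              · simp only [hjU, if_false]
                obtain ⟨_, _, hS⟩ := Finset.mem_filter.1 (hY' hy)
                by_contra hcon
                have : j ∈ S0 := by
                  rw [← hS]; exact Finset.mem_filter.2 ⟨Finset.mem_univ _, hcon⟩
                rcases Finset.mem_union.1 hj with h' | h'
                · exact hjU h'
                · exact Finset.mem_compl.1 h' this)
          refine hc1.trans ((latBall_ncard_le_box _ hr).trans ?_)
          have hcard : Fintype.card {j // j ∉ U ∪ S0ᶜ} + U.card = S0.card := by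
            rw [Fintype.card_subtype, ← Finset.card_sdiff_add_card_eq_card hU]
            congr 2
            ext j; simp; tauto
          rw [← hcard, pow_add, mul_assoc, ← mul_pow]
          refine le_mul_of_one_le_right (by positivity) (one_le_pow₀ ?_)
          rw [mul_comm]; exact hκ')
      have hle : ∀ y ∈ Y.filter (fun y => big c y ∧ S c y = S0), (p : ℝ) ^ parCount H x L y ≤
          ((p : ℝ) ^ m * ((p : ℝ) ^ (varNbr H S0).card)⁻¹) *
            (p : ℝ) ^ (Finset.univ.filter fun i => τ' y i ≠ none).card := by
        intro y _
        have hN : (varNbr H S0).card ≤ m := by simpa using (varNbr H S0).card_le_univ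
        have e : (p : ℝ) ^ m * ((p : ℝ) ^ (varNbr H S0).card)⁻¹ =
            (p : ℝ) ^ (m - (varNbr H S0).card) := by
          rw [pow_sub₀ _ (by linarith) hN]
        rw [e, ← pow_add, hcnt]
        refine pow_le_pow_right₀ hp1 ?_
        have hsub : (Finset.univ.filter fun i => τ y i ≠ none) ⊆
            (varNbr H S0)ᶜ ∪ (Finset.univ.filter fun i => τ' y i ≠ none) := by
          intro i hi
          simp only [Finset.mem_union, Finset.mem_compl, Finset.mem_filter, Finset.mem_univ,
            true_and, τ'] at hi ⊢
          by_cases hiN : i ∈ varNbr H S0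
          · right; rw [if_pos hiN]; exact hi
          · left; exact hiN
        have := (Finset.card_le_card hsub).trans (Finset.card_union_le _ _)
        rwa [Finset.card_compl, Fintype.card_fin] at this
      calc _ ≤ ∑ y ∈ Y.filter (fun y => big c y ∧ S c y = S0),
            ((p : ℝ) ^ m * ((p : ℝ) ^ (varNbr H S0).card)⁻¹) *
            (p : ℝ) ^ (Finset.univ.filter fun i => τ' y i ≠ none).card := Finset.sum_le_sum hle
        _ ≤ ((p : ℝ) ^ m * (2 * (p : ℝ) ^ (-(f * D))) ^ S0.card) *
            ((2 * r + 1) ^ S0.card * G) := by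
          rw [← Finset.mul_sum]
          have := h.varNbr_weight hf hD hp1 h2 S0 hS0
          gcongr
        _ = _ := by rw [hb, mul_pow (2 * r + 1)]; ring
    have hcover : Y.filter (fun y => ¬ small y) ⊆
        (L ×ˢ N).biUnion fun q => Y.filter (fun y => big q.1 y ∧ S q.1 y = q.2) := by
      intro y hy
      obtain ⟨hyY, hys⟩ := Finset.mem_filter.1 hy
      simp only [small, not_forall, not_le] at hys
      obtain ⟨c, hc⟩ := hys
      have hpos : (0 : ℝ) < ((Finset.univ.filter fun i => τ y i = some c).card : ℝ) :=
        lt_of_le_of_lt (by positivity) hc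
      obtain ⟨i, hi⟩ := Finset.card_pos.1 (by exact_mod_cast hpos)
      have hcL := (hτsome y i c (Finset.mem_filter.1 hi).2).1
      obtain ⟨j, hj⟩ := hne y hyY c hcL
      refine Finset.mem_biUnion.2 ⟨(c, S c y), ?_, Finset.mem_filter.2 ⟨hyY, hc, rfl⟩⟩
      refine Finset.mem_product.2 ⟨hcL, Finset.mem_erase.2 ⟨?_, by simp⟩⟩
      exact Finset.ne_empty_of_mem (Finset.mem_filter.2 ⟨Finset.mem_univ j, hj⟩)
    have hNsum : ∑ S0 ∈ N, b ^ S0.card = (1 + b) ^ n - 1 := by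
      have := Finset.sum_pow_mul_eq_add_pow b 1 (Finset.univ : Finset (Fin n))
      simp only [one_pow, mul_one, Finset.card_univ, Fintype.card_fin] at this
      have h0 : (∅ : Finset (Fin n)) ∈ (Finset.univ : Finset (Fin n)).powerset := by simp
      rw [← Finset.add_sum_erase _ _ h0] at this
      rw [add_comm 1 b, ← this]
      simp [N]
    calc _ ≤ ∑ y ∈ (L ×ˢ N).biUnion fun q => Y.filter (fun y => big q.1 y ∧ S q.1 y = q.2),
          (p : ℝ) ^ parCount H x L y :=
          Finset.sum_le_sum_of_subset_of_nonneg hcover fun _ _ _ => by positivity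
      _ ≤ ∑ q ∈ L ×ˢ N, ∑ y ∈ Y.filter (fun y => big q.1 y ∧ S q.1 y = q.2),
          (p : ℝ) ^ parCount H x L y :=
          sum_biUnion_le _ _ fun _ => by positivity
      _ ≤ ∑ q ∈ L ×ˢ N, (p : ℝ) ^ m * b ^ q.2.card * G := by
          refine Finset.sum_le_sum fun q hq => ?_
          obtain ⟨h1, h4⟩ := Finset.mem_product.1 hq
          exact hpair q.1 h1 q.2 h4
      _ = _ := by
          rw [Finset.sum_product]
          simp only [Finset.sum_const, nsmul_eq_mul]
          rw [← hNsum, ← Finset.sum_mul, ← Finset.mul_sum]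
          ring

/-! ### Moments of the number of solutions -/

/-- Vectors over `𝔽_p` supported on the positions marked by `J`. -/
noncomputable def rowF (p : ℕ) [NeZero p] {n : ℕ} (J : Fin n → Bool) : Finset (Fin n → ZMod p) :=
  Fintype.piFinset fun j => if J j = true then Finset.univ else {0}

lemma mem_rowF {p n : ℕ} [NeZero p] {J : Fin n → Bool} {h : Fin n → ZMod p} :
    h ∈ rowF p J ↔ ∀ j, J j = false → h j = 0 := by
  simp only [rowF, Fintype.mem_piFinset]
  refine forall_congr' fun j => ?_
  cases J j <;> simp

lemma rowF_card (p : ℕ) [NeZero p] {n : ℕ} (J : Fin n → Bool) :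
    (rowF p J).card = p ^ (Finset.univ.filter fun j => J j = true).card := by
  rw [rowF, Fintype.card_piFinset, ← Finset.prod_filter_mul_prod_filter_not _ (fun j => J j = true),
    Finset.prod_congr rfl (g := fun _ => p), Finset.prod_congr (s₁ := Finset.univ.filter fun j => ¬ J j = true)
      rfl (g := fun _ => 1)]
  · simp
  · intro j hj
    rw [if_neg (Finset.mem_filter.1 hj).2]; simp
  · intro j hj
    rw [if_pos (Finset.mem_filter.1 hj).2]; simp [ZMod.card]

open Classical in
/-- Number of elements of `s` satisfying `Q`. -/
noncomputable def cnt {α : Type*} (s : Finset α) (Q : α → Prop) : ℕ := (s.filter Q).card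

lemma cnt_eq {α : Type*} (s : Finset α) (Q : α → Prop) [DecidablePred Q] :
    cnt s Q = (s.filter Q).card := by
  unfold cnt; congr!

lemma cnt_mono {α : Type*} {s : Finset α} {Q Q' : α → Prop} (h : ∀ a ∈ s, Q a → Q' a) :
    cnt s Q ≤ cnt s Q' := by
  classical
  rw [cnt_eq, cnt_eq]
  exact Finset.card_le_card fun a ha => by
    rw [Finset.mem_filter] at ha ⊢
    exact ⟨ha.1, h a ha.1 ha.2⟩

lemma cnt_congr {α : Type*} {s : Finset α} {Q Q' : α → Prop} (h : ∀ a ∈ s, Q a ↔ Q' a) :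
    cnt s Q = cnt s Q' :=
  (cnt_mono fun a ha => (h a ha).1).antisymm (cnt_mono fun a ha => (h a ha).2)

lemma cnt_le_card {α : Type*} (s : Finset α) (Q : α → Prop) : cnt s Q ≤ s.card := by
  classical
  rw [cnt_eq]
  exact Finset.card_le_card (Finset.filter_subset _ _)

/-- If an additive map sends a finite set `s`, closed under addition and subtraction, onto `W`, then
its fibres in `s` all have `|s| / |W|` elements. -/
lemma fiber_card {V W : Type*} [AddCommGroup V] [AddCommGroup W] [Fintype W] [DecidableEq W]
    [DecidableEq V]
    (s : Finset V) (hadd : ∀ u ∈ s, ∀ v ∈ s, u + v ∈ s) (hsub : ∀ u ∈ s, ∀ v ∈ s, u - v ∈ s)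
    (φ : V →+ W) (hφ : ∀ w, ∃ v ∈ s, φ v = w) (w : W) :
    (s.filter fun v => φ v = w).card * Fintype.card W = s.card := by
  have key : ∀ w', (s.filter fun v => φ v = w').card = (s.filter fun v => φ v = w).card := by
    intro w'
    obtain ⟨v0, hv0, h0⟩ := hφ (w - w')
    refine Finset.card_bij' (fun v _ => v + v0) (fun v _ => v - v0) ?_ ?_ ?_ ?_
    · intro v hv
      obtain ⟨h1, h2⟩ := Finset.mem_filter.1 hv
      exact Finset.mem_filter.2 ⟨hadd _ h1 _ hv0, by rw [map_add, h2, h0]; abel⟩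
    · intro v hv
      obtain ⟨h1, h2⟩ := Finset.mem_filter.1 hv
      exact Finset.mem_filter.2 ⟨hsub _ h1 _ hv0, by rw [map_sub, h2, h0]; abel⟩
    · intro v _; simp
    · intro v _; simp
  have h := Finset.card_eq_sum_card_fiberwise (s := s) (f := φ) (t := Finset.univ) (by simp)
  rw [h, Finset.sum_congr rfl (fun w' _ => key w')]
  simp [mul_comm]

section rows
variable {p n : ℕ} [Fact p.Prime] (J : Fin n → Bool)

lemma rowF_add (u : Fin n → ZMod p) (hu : u ∈ rowF p J) (v) (hv : v ∈ rowF p J) :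
    u + v ∈ rowF p J := by
  rw [mem_rowF] at *
  intro j hj
  simp [hu j hj, hv j hj]

lemma rowF_sub (u : Fin n → ZMod p) (hu : u ∈ rowF p J) (v) (hv : v ∈ rowF p J) :
    u - v ∈ rowF p J := by
  rw [mem_rowF] at *
  intro j hj
  simp [hu j hj, hv j hj]

lemma single_mem_rowF {j : Fin n} (hj : J j = true) (a : ZMod p) :
    Pi.single j a ∈ rowF p J := by
  rw [mem_rowF]
  intro k hk
  rw [Pi.single_eq_of_ne]
  rintro rfl
  rw [hj] at hk; cases hk

/-- A random row has inner product `a` with `y` with probability `1 / p`, as soon as `y` does not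
vanish on the support of the row. -/
lemma row_one (y : Fin n → ZMod p) (a : ZMod p) (h : ∃ j, J j = true ∧ y j ≠ 0) :
    cnt (rowF p J) (fun v => v ⬝ᵥ y = a) * p = (rowF p J).card := by
  classical
  let φ : (Fin n → ZMod p) →+ ZMod p :=
    { toFun := fun v => v ⬝ᵥ y, map_zero' := by simp, map_add' := fun u v => add_dotProduct u v y }
  have := fiber_card (rowF p J) (rowF_add J) (rowF_sub J) φ (by
    intro w
    obtain ⟨j, hj, hy⟩ := h
    refine ⟨Pi.single j (w / y j), single_mem_rowF J hj _, ?_⟩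
    simp [φ, single_dotProduct, hy]) a
  rwa [ZMod.card, ← cnt_eq] at this

/-- The inner products of a random row with `x` and `y` are jointly uniform, as soon as `x` is
nonzero and `y` is not a multiple of `x` on the support of the row. -/
lemma row_two (x y : Fin n → ZMod p) (a b : ZMod p) (h : ∃ j, J j = true ∧ x j ≠ 0)
    (hc : ¬ ∃ c, ∀ j, J j = true → y j = c * x j) :
    cnt (rowF p J) (fun v => v ⬝ᵥ x = a ∧ v ⬝ᵥ y = b) * p ^ 2 = (rowF p J).card := by
  classical
  let φ : (Fin n → ZMod p) →+ ZMod p × ZMod p :=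
    { toFun := fun v => (v ⬝ᵥ x, v ⬝ᵥ y), map_zero' := by simp,
      map_add' := fun u v => by simp [add_dotProduct] }
  have := fiber_card (rowF p J) (rowF_add J) (rowF_sub J) φ (by
    rintro ⟨w1, w2⟩
    obtain ⟨j, hj, hx⟩ := h
    push Not at hc
    obtain ⟨k, hk, hyk⟩ := hc (y j / x j)
    have hdet : x j * y k - x k * y j ≠ 0 := by
      intro h0
      apply hyk
      field_simp
      linear_combination h0
    refine ⟨Pi.single j ((w1 * y k - w2 * x k) / (x j * y k - x k * y j)) +
      Pi.single k ((w2 * x j - w1 * y j) / (x j * y k - x k * y j)),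
      rowF_add J _ (single_mem_rowF J hj _) _ (single_mem_rowF J hk _), ?_⟩
    simp only [φ, AddMonoidHom.coe_mk, ZeroHom.coe_mk, add_dotProduct, single_dotProduct,
      Prod.mk.injEq]
    constructor
    · rw [div_mul_eq_mul_div, div_mul_eq_mul_div, ← add_div, div_eq_iff hdet]; ring
    · rw [div_mul_eq_mul_div, div_mul_eq_mul_div, ← add_div, div_eq_iff hdet]; ring) (a, b)
  rw [Fintype.card_prod, ZMod.card, ← cnt_eq] at this
  simpa [φ, Prod.mk.injEq, pow_two] using this

end rows

/-- The sample space: matrices over `𝔽_p` vanishing off the skeleton `H`. -/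
noncomputable def compat (p : ℕ) [NeZero p] {m n : ℕ} (H : Matrix (Fin m) (Fin n) Bool) :
    Finset (Matrix (Fin m) (Fin n) (ZMod p)) :=
  Fintype.piFinset fun i => rowF p (H i)

lemma mem_compat {p m n : ℕ} [NeZero p] {H : Matrix (Fin m) (Fin n) Bool}
    {M : Matrix (Fin m) (Fin n) (ZMod p)} :
    M ∈ compat p H ↔ ∀ i j, H i j = false → M i j = 0 := by
  simp only [compat]
  refine (Fintype.mem_piFinset).trans ?_
  exact forall_congr' fun i => mem_rowF

lemma compat_card (p : ℕ) [NeZero p] {m n : ℕ} (H : Matrix (Fin m) (Fin n) Bool) :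
    (compat p H).card = p ^ (Set.ncard {q : Fin m × Fin n | H q.1 q.2 = true}) := by
  classical
  have h1 : (compat p H).card = ∏ i, (rowF p (H i)).card := Fintype.card_piFinset _
  rw [h1]
  simp_rw [rowF_card]
  rw [Finset.prod_pow_eq_pow_sum]
  congr 1
  have : {q : Fin m × Fin n | H q.1 q.2 = true} =
      ((Finset.univ.filter fun q : Fin m × Fin n => H q.1 q.2 = true) : Set (Fin m × Fin n)) := by
    ext; simp
  rw [this, Set.ncard_coe_finset]
  simp_rw [Finset.card_filter]
  rw [← Finset.univ_product_univ, Finset.sum_product]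

section moments
variable {p m n : ℕ} [Fact p.Prime] (H : Matrix (Fin m) (Fin n) Bool)

/-- Independence of the rows. -/
lemma compat_cnt (Q : Fin m → (Fin n → ZMod p) → Prop) :
    cnt (compat p H) (fun M => ∀ i, Q i (M i)) = ∏ i, cnt (rowF p (H i)) (Q i) := by
  classical
  simp_rw [cnt_eq]
  rw [← Fintype.card_piFinset]
  congr 1
  ext M
  refine Finset.mem_filter.trans ?_
  refine Iff.trans ?_ Fintype.mem_piFinset.symm
  refine (and_congr_left fun _ => Fintype.mem_piFinset).trans ?_
  simp only [Finset.mem_filter]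
  exact forall_and.symm

/-- If a row condition has probability at most `p ^ (-k)`, or `p ^ (1 - k)` for the rows in `A`, then
all rows satisfy it with probability at most `p ^ (|A| - k m)`. -/
lemma compat_cnt_le (Q : Fin m → (Fin n → ZMod p) → Prop) (A : Fin m → Prop) (k : ℕ)
    (h0 : ∀ i, A i → (cnt (rowF p (H i)) (Q i) : ℝ) * p ^ k ≤ (rowF p (H i)).card * p)
    (h0' : ∀ i, ¬ A i → (cnt (rowF p (H i)) (Q i) : ℝ) * p ^ k ≤ (rowF p (H i)).card) :
    (cnt (compat p H) (fun M => ∀ i, Q i (M i)) : ℝ) * (p ^ m) ^ k ≤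
      (compat p H).card * (p : ℝ) ^ cnt Finset.univ A := by
  classical
  have h1 : (compat p H).card = ∏ i, (rowF p (H i)).card := Fintype.card_piFinset _
  rw [compat_cnt, h1]
  push_cast
  have e1 : ((p : ℝ) ^ m) ^ k = ∏ _i : Fin m, (p : ℝ) ^ k := by
    simp [← pow_mul, mul_comm]
  have e2 : (p : ℝ) ^ cnt Finset.univ A = ∏ i, (if A i then (p : ℝ) else 1) := by
    rw [cnt_eq, Finset.prod_ite]; simp
  rw [e1, e2, ← Finset.prod_mul_distrib, ← Finset.prod_mul_distrib]
  refine Finset.prod_le_prod (fun i _ => by positivity) fun i _ => ?_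
  split_ifs with hA
  · exact h0 i hA
  · rw [mul_one]; exact h0' i hA

lemma mulVec_eq_iff (M : Matrix (Fin m) (Fin n) (ZMod p)) (y : Fin n → ZMod p)
    (s : Fin m → ZMod p) : M.mulVec y = s ↔ ∀ i, M i ⬝ᵥ y = s i := by
  rw [funext_iff]; rfl

lemma parCount_eq_cnt (x : Fin n → ZMod p) (L : Finset (ZMod p)) (y : Fin n → ℤ) :
    parCount H x L y = cnt Finset.univ fun i =>
      ∃ c ∈ L, ∀ j, H i j = true → ((y j : ℤ) : ZMod p) = c * x j := by
  classical
  rw [cnt_eq]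
  unfold parCount
  congr!

/-- `P(ℍ y = s) ≤ p ^ (parCount - m)`: only the checks on whose neighbourhood `y` vanishes are
wasted, which is the case `x = 1`, `L = {0}` of `parCount`. -/
lemma first_moment (s : Fin m → ZMod p) (y : Fin n → ℤ) :
    (cnt (compat p H) (fun M => M.mulVec (fun j => ((y j : ℤ) : ZMod p)) = s) : ℝ) * p ^ m ≤
      (compat p H).card * (p : ℝ) ^ parCount H (1 : Fin n → ZMod p) {0} y := by
  have := compat_cnt_le H
    (fun i v => v ⬝ᵥ (fun j => ((y j : ℤ) : ZMod p)) = s i)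
    (fun i => ∃ c ∈ ({0} : Finset (ZMod p)), ∀ j, H i j = true →
      ((y j : ℤ) : ZMod p) = c * (1 : Fin n → ZMod p) j) 1
    (fun i _ => by
      rw [pow_one]
      refine mul_le_mul_of_nonneg_right ?_ (by positivity)
      exact_mod_cast cnt_le_card _ _)
    (fun i hA => by
      push Not at hA
      obtain ⟨j, hj, hy⟩ := hA 0 (by simp)
      have := row_one (H i) (fun j => ((y j : ℤ) : ZMod p)) (s i) ⟨j, hj, by simpa using hy⟩
      rw [pow_one]
      exact_mod_cast this.le)
  rw [pow_one] at this
  rw [cnt_congr fun M _ => mulVec_eq_iff M _ s, parCount_eq_cnt]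
  exact this

/-- `P(ℍ x = s) = p ^ (-m)` when no coordinate of `x` vanishes. -/
lemma exact_moment (s : Fin m → ZMod p) (x : Fin n → ZMod p) (hx : ∀ j, x j ≠ 0)
    (hH : ∀ i, ∃ j, H i j = true) :
    (cnt (compat p H) (fun M => M.mulVec x = s) : ℝ) * p ^ m = (compat p H).card := by
  have h1 : (compat p H).card = ∏ i, (rowF p (H i)).card := Fintype.card_piFinset _
  rw [cnt_congr fun M _ => mulVec_eq_iff M _ s, compat_cnt H (fun i v => v ⬝ᵥ x = s i), h1]
  have e1 : (p : ℝ) ^ m = ∏ _i : Fin m, (p : ℝ) := by simp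
  push_cast
  rw [e1, ← Finset.prod_mul_distrib]
  refine Finset.prod_congr rfl fun i _ => ?_
  obtain ⟨j, hj⟩ := hH i
  exact_mod_cast row_one (H i) x (s i) ⟨j, hj, hx j⟩

/-- `P(ℍ x = ℍ y = s) ≤ p ^ (parCount - 2 m)`. -/
lemma pair_moment (s : Fin m → ZMod p) (x : Fin n → ZMod p) (hx : ∀ j, x j ≠ 0)
    (hH : ∀ i, ∃ j, H i j = true) (y : Fin n → ℤ) :
    (cnt (compat p H) (fun M => M.mulVec x = s ∧
        M.mulVec (fun j => ((y j : ℤ) : ZMod p)) = s) : ℝ) * (p ^ m) ^ 2 ≤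
      (compat p H).card * (p : ℝ) ^ parCount H x Finset.univ y := by
  have := compat_cnt_le H
    (fun i v => v ⬝ᵥ x = s i ∧ v ⬝ᵥ (fun j => ((y j : ℤ) : ZMod p)) = s i)
    (fun i => ∃ c ∈ (Finset.univ : Finset (ZMod p)), ∀ j, H i j = true →
      ((y j : ℤ) : ZMod p) = c * x j) 2
    (fun i _ => by
      obtain ⟨j, hj⟩ := hH i
      have := row_one (H i) x (s i) ⟨j, hj, hx j⟩
      have h2 : (cnt (rowF p (H i)) (fun v => v ⬝ᵥ x = s i ∧
          v ⬝ᵥ (fun j => ((y j : ℤ) : ZMod p)) = s i) : ℝ) ≤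
          (cnt (rowF p (H i)) (fun v => v ⬝ᵥ x = s i)) := by
        exact_mod_cast cnt_mono (Q' := fun v => v ⬝ᵥ x = s i) fun v _ hv => And.left hv
      rw [← this, pow_two]
      push_cast
      rw [← mul_assoc]
      gcongr)
    (fun i hA => by
      obtain ⟨j, hj⟩ := hH i
      have := row_two (H i) x (fun j => ((y j : ℤ) : ZMod p)) (s i) (s i) ⟨j, hj, hx j⟩
        (by simpa using hA)
      exact_mod_cast this.le)
  have h3 : cnt (compat p H) (fun M => M.mulVec x = s ∧
        M.mulVec (fun j => ((y j : ℤ) : ZMod p)) = s) = _ :=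
    cnt_congr fun M _ => ((mulVec_eq_iff M _ s).and (mulVec_eq_iff M _ s)).trans
      (forall_and.symm)
  rw [h3, parCount_eq_cnt]
  exact this

/-- Union bound over a finite set of candidate solutions. -/
lemma prob_le (s : Fin m → ZMod p) (Y : Finset (Fin n → ℤ)) :
    (cnt (compat p H) (fun M => ∃ y ∈ Y,
        M.mulVec (fun j => ((y j : ℤ) : ZMod p)) = s) : ℝ) / (compat p H).card ≤
      (p ^ m : ℝ)⁻¹ * ∑ y ∈ Y, (p : ℝ) ^ parCount H (1 : Fin n → ZMod p) {0} y := by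
  classical
  have hp0 : (0 : ℝ) < p := by exact_mod_cast (Fact.out : p.Prime).pos
  have hc : (0 : ℝ) < (compat p H).card := by
    rw [compat_card]; push_cast; positivity
  rw [div_le_iff₀ hc, cnt_eq]
  have h1 : ((compat p H).filter fun M => ∃ y ∈ Y,
      M.mulVec (fun j => ((y j : ℤ) : ZMod p)) = s) ⊆
      Y.biUnion fun y => (compat p H).filter fun M =>
        M.mulVec (fun j => ((y j : ℤ) : ZMod p)) = s := by
    intro M hM
    simp only [Finset.mem_filter, Finset.mem_biUnion] at hM ⊢
    obtain ⟨h, y, hy, e⟩ := hM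
    exact ⟨y, hy, h, e⟩
  have h2 := (Finset.card_le_card h1).trans Finset.card_biUnion_le
  calc _ ≤ ∑ y ∈ Y, (((compat p H).filter fun M =>
        M.mulVec (fun j => ((y j : ℤ) : ZMod p)) = s).card : ℝ) := by exact_mod_cast h2
    _ ≤ ∑ y ∈ Y, (p ^ m : ℝ)⁻¹ * ((compat p H).card *
        (p : ℝ) ^ parCount H (1 : Fin n → ZMod p) {0} y) := by
      refine Finset.sum_le_sum fun y _ => ?_
      rw [le_inv_mul_iff₀ (by positivity), mul_comm]
      have := first_moment H s y
      rwa [cnt_eq] at this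
    _ = _ := by
      rw [← Finset.mul_sum, ← Finset.mul_sum]; ring

/-- Second moment method: Cauchy-Schwarz applied to the number of solutions in `B`, whose points
have no zero coordinate modulo `p`. -/
lemma prob_ge (s : Fin m → ZMod p) (B : Finset (Fin n → ℤ))
    (hB : ∀ x ∈ B, ∀ j, ((x j : ℤ) : ZMod p) ≠ 0) (hH : ∀ i, ∃ j, H i j = true)
    {T : ℝ} (hT : 0 < T)
    (hBT : ∀ x ∈ B, ∑ y ∈ B, (p : ℝ) ^ parCount H (fun j => ((x j : ℤ) : ZMod p))
      Finset.univ y ≤ T) :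
    (B.card : ℝ) / T ≤
    (cnt (compat p H) (fun M => ∃ y ∈ B,
        M.mulVec (fun j => ((y j : ℤ) : ZMod p)) = s) : ℝ) / (compat p H).card := by
  have hp0 : (0 : ℝ) < p := by exact_mod_cast (Fact.out : p.Prime).pos
  have hc : (0 : ℝ) < (compat p H).card := by
    rw [compat_card]; push_cast; positivity
  classical
  rw [cnt_eq]
  set C := compat p H
  set A := C.filter fun M => ∃ y ∈ B, M.mulVec (fun j => ((y j : ℤ) : ZMod p)) = s with hA
  rcases B.eq_empty_or_nonempty with rfl | hne
  · simp; positivity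
  have hBpos : (0 : ℝ) < B.card := by exact_mod_cast hne.card_pos
  let e : (Fin n → ℤ) → Matrix (Fin m) (Fin n) (ZMod p) → ℝ := fun y M =>
    if M.mulVec (fun j => ((y j : ℤ) : ZMod p)) = s then 1 else 0
  -- number of solutions in `B`
  let X : Matrix (Fin m) (Fin n) (ZMod p) → ℝ := fun M => ∑ y ∈ B, e y M
  have hX1 : (∑ M ∈ A, X M) * p ^ m = B.card * C.card := by
    have : ∑ M ∈ A, X M = ∑ M ∈ C, X M := by
      refine Finset.sum_subset (Finset.filter_subset _ _) fun M hM hMA => ?_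
      refine Finset.sum_eq_zero fun y hy => if_neg fun h => hMA ?_
      exact Finset.mem_filter.2 ⟨hM, y, hy, h⟩
    rw [this, Finset.sum_comm, Finset.sum_mul]
    rw [Finset.sum_congr rfl (g := fun _ => (C.card : ℝ)), Finset.sum_const, nsmul_eq_mul]
    intro y hy
    rw [Finset.sum_boole]
    have := exact_moment H s _ (hB y hy) hH
    rwa [cnt_eq] at this
  have hX2 : (∑ M ∈ A, X M ^ 2) * (p ^ m) ^ 2 ≤ B.card * (C.card * T) := by
    have : ∑ M ∈ A, X M ^ 2 ≤ ∑ M ∈ C, X M ^ 2 :=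
      Finset.sum_le_sum_of_subset_of_nonneg (Finset.filter_subset _ _)
        fun M _ _ => sq_nonneg _
    have h2 : ∑ M ∈ C, X M ^ 2 = ∑ x ∈ B, ∑ y ∈ B, ((C.filter fun M =>
        M.mulVec (fun j => ((x j : ℤ) : ZMod p)) = s ∧
        M.mulVec (fun j => ((y j : ℤ) : ZMod p)) = s).card : ℝ) := by
      simp_rw [X, pow_two, Finset.sum_mul_sum]
      rw [Finset.sum_comm]
      refine Finset.sum_congr rfl fun x _ => ?_
      rw [Finset.sum_comm]
      refine Finset.sum_congr rfl fun y _ => ?_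
      rw [← Finset.sum_boole]
      refine Finset.sum_congr rfl fun M _ => ?_
      simp only [e]
      split_ifs <;> simp_all
    calc _ ≤ (∑ M ∈ C, X M ^ 2) * (p ^ m : ℝ) ^ 2 := by gcongr
      _ = ∑ x ∈ B, ∑ y ∈ B, ((C.filter fun M =>
        M.mulVec (fun j => ((x j : ℤ) : ZMod p)) = s ∧
        M.mulVec (fun j => ((y j : ℤ) : ZMod p)) = s).card : ℝ) * (p ^ m) ^ 2 := by
        rw [h2, Finset.sum_mul]; simp_rw [Finset.sum_mul]
      _ ≤ ∑ x ∈ B, C.card * T := by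
        refine Finset.sum_le_sum fun x hx => ?_
        calc _ ≤ ∑ y ∈ B, (C.card : ℝ) * (p : ℝ) ^ parCount H
              (fun j => ((x j : ℤ) : ZMod p)) Finset.univ y :=
              Finset.sum_le_sum fun y _ => by
                have := pair_moment H s _ (hB x hx) hH y
                rwa [cnt_eq] at this
          _ ≤ _ := by
            rw [← Finset.mul_sum]
            gcongr
            exact hBT x hx
      _ = _ := by rw [Finset.sum_const, nsmul_eq_mul]
  have hCS : (∑ M ∈ A, X M) ^ 2 ≤ A.card * ∑ M ∈ A, X M ^ 2 := sq_sum_le_card_mul_sum_sq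
  rw [div_le_div_iff₀ hT hc]
  have h3 : (B.card * (C.card : ℝ)) ^ 2 ≤ A.card * (B.card * (C.card * T)) := by
    calc (B.card * (C.card : ℝ)) ^ 2 = (∑ M ∈ A, X M) ^ 2 * (p ^ m) ^ 2 := by
          rw [← hX1, mul_pow]
      _ ≤ (A.card * ∑ M ∈ A, X M ^ 2) * (p ^ m) ^ 2 := by gcongr
      _ = A.card * ((∑ M ∈ A, X M ^ 2) * (p ^ m) ^ 2) := by ring
      _ ≤ _ := by gcongr
  have h4 : 0 < (B.card * (C.card : ℝ)) := by positivity
  refine le_of_mul_le_mul_right ?_ h4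
  calc _ = (B.card * (C.card : ℝ)) ^ 2 := by ring
    _ ≤ _ := h3
    _ = _ := by ring
end moments

/-! ### Probability bounds at a fixed radius -/

lemma intNorm_le_iff {n : ℕ} {r : ℝ} (hr : 0 ≤ r) (x : Fin n → ℤ) :
    intNorm x ≤ r ↔ x ∈ latBall (Fin n) r := by
  unfold intNorm latBall
  rw [Real.sqrt_le_left hr]; rfl

/-- Every check has a neighbour as soon as singletons are in the expansion range. -/
lemma FinGood.exists_nbr {m n : ℕ} {H : Matrix (Fin m) (Fin n) Bool} {f D : ℝ}
    (h : FinGood H f D) (hf : 0 < f) (hD : 0 < D) (h1 : 1 ≤ f * n / (D + 1)) (i : Fin m) :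
    ∃ j, H i j = true := by
  have := h.2 {i} (by simpa using h1)
  have h2 : 0 < D * (({i} : Finset (Fin m)).card : ℝ) / f := by
    rw [Finset.card_singleton]; positivity
  obtain ⟨j, hj⟩ := Finset.card_pos.1 (by exact_mod_cast h2.trans_le this :
    0 < (checkNbr H {i}).card)
  simp only [checkNbr, Finset.mem_filter, Finset.mem_singleton, exists_eq_left] at hj
  exact ⟨j, hj.2⟩

/-- Integers of absolute value at most `r < p / 2` that agree modulo `p` are equal. -/
lemma int_eq_of_cast_eq {p : ℕ} {a b : ℤ} {r : ℝ} (hrp : 2 * r < p) (ha : |(a : ℝ)| ≤ r)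
    (hb : |(b : ℝ)| ≤ r) (h : (a : ZMod p) = (b : ZMod p)) : a = b := by
  have h1 := (ZMod.intCast_eq_intCast_iff_dvd_sub a b p).1 h
  by_contra hne
  have h2 := Int.le_of_dvd (abs_pos.2 (sub_ne_zero.2 (Ne.symm hne))) ((dvd_abs _ _).2 h1)
  have h3 : (p : ℝ) ≤ |(b : ℝ) - a| := by exact_mod_cast h2
  have := abs_sub (b : ℝ) a
  linarith

section finite
variable {m n p : ℕ} [Fact p.Prime] {H : Matrix (Fin m) (Fin n) Bool} {f D : ℝ}

/-- First moment bound for the existence of a solution of norm at most `r`. -/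
lemma exists_prob_le (h : FinGood H f D) (hf : 0 < f) (hD : 0 < D)
    (h2 : (p : ℝ) ^ (D ^ 2 + f * D) ≤ 2 ^ ((n : ℝ) / (D + 1)))
    (h3 : 2 * ((n : ℝ) / (D + 1) + D / f) < n)
    {r κ : ℝ} (hr : 0 ≤ r) (hrp : 2 * r < p) (hκ0 : 0 < κ) (hκ1 : κ ≤ 1) (hκ : √n ≤ κ * r)
    (hκ' : 1 ≤ κ * (2 * r + 1)) (s : Fin m → ZMod p) (hs : s ≠ 0) :
    (cnt (compat p H) (fun M => ∃ x : Fin n → ℤ,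
        M.mulVec (fun j => ((x j : ℤ) : ZMod p)) = s ∧ intNorm x ≤ r) : ℝ) / (compat p H).card ≤
      (ballVol n * (r + √n / 2) ^ n * ((p : ℝ) ^ m)⁻¹ +
          ((1 + (2 * r + 1) * (2 * (p : ℝ) ^ (-(f * D)))) ^ n - 1)) *
        (1 + p * κ ^ (D / f)) ^ m := by
  classical
  have hp0 : (0 : ℝ) < p := by exact_mod_cast (Fact.out : p.Prime).pos
  let Y : Finset (Fin n → ℤ) := (latBall_finite (Fin n) hr).toFinset.filter fun y =>
    ∃ j, ((y j : ℤ) : ZMod p) ≠ 0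
  have hmono : cnt (compat p H) (fun M => ∃ x : Fin n → ℤ,
        M.mulVec (fun j => ((x j : ℤ) : ZMod p)) = s ∧ intNorm x ≤ r) ≤
      cnt (compat p H) (fun M => ∃ y ∈ Y, M.mulVec (fun j => ((y j : ℤ) : ZMod p)) = s) := by
    refine cnt_mono ?_
    rintro M - ⟨x, hx, hxr⟩
    refine ⟨x, ?_, hx⟩
    simp only [Y, Finset.mem_filter, Set.Finite.mem_toFinset]
    refine ⟨(intNorm_le_iff hr x).1 hxr, ?_⟩
    by_contra hcon
    push Not at hcon
    -- a vector vanishing modulo `p` has zero syndrome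
    apply hs
    rw [← hx]
    have : (fun j => ((x j : ℤ) : ZMod p)) = 0 := funext hcon
    rw [this, Matrix.mulVec_zero]
  have hsum := parCount_sum_le h hf hD h2 h3 (1 : Fin n → ZMod p) (fun j => one_ne_zero) {0}
    hr hrp hκ0 hκ1 hκ hκ' Y
    (fun y hy => by simpa using (Finset.mem_filter.1 hy).1)
    (fun y hy c hc => by
      obtain ⟨j, hj⟩ := (Finset.mem_filter.1 hy).2
      refine ⟨j, ?_⟩
      rw [Finset.mem_singleton.1 hc, zero_mul]
      exact hj)
  rw [Finset.card_singleton] at hsum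
  push_cast at hsum
  rw [one_mul, one_mul] at hsum
  have hP := prob_le H s Y
  calc _ ≤ (cnt (compat p H) (fun M => ∃ y ∈ Y,
        M.mulVec (fun j => ((y j : ℤ) : ZMod p)) = s) : ℝ) / (compat p H).card := by
        gcongr
    _ ≤ _ := hP
    _ ≤ _ := mul_le_mul_of_nonneg_left hsum (by positivity)
    _ = _ := by field_simp

lemma parCount_le (x : Fin n → ZMod p) (L : Finset (ZMod p)) (y : Fin n → ℤ) :
    parCount H x L y ≤ m := by
  rw [parCount_eq_cnt]
  simpa using cnt_le_card (Finset.univ : Finset (Fin m)) _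

/-- Second moment bound for the existence of a solution of norm at most `r`. -/
lemma le_exists_prob (h : FinGood H f D) (hf : 0 < f) (hD : 0 < D)
    (h1 : 1 ≤ f * n / (D + 1))
    (h2 : (p : ℝ) ^ (D ^ 2 + f * D) ≤ 2 ^ ((n : ℝ) / (D + 1)))
    (h3 : 2 * ((n : ℝ) / (D + 1) + D / f) < n)
    {r κ : ℝ} (hr : √n / 2 ≤ r) (hrp : 2 * r < p) (hκ0 : 0 < κ) (hκ1 : κ ≤ 1) (hκ : √n ≤ κ * r)
    (hκ' : 1 ≤ κ * (2 * r + 1)) (s : Fin m → ZMod p) :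
    (ballVol n * (r - √n / 2) ^ n - n * κ * (ballVol n * (r + √n / 2) ^ n)) /
      ((ballVol n * (r + √n / 2) ^ n + p ^ (m + 1) *
          ((1 + (2 * r + 1) * (2 * (p : ℝ) ^ (-(f * D)))) ^ n - 1)) *
        (1 + p * (p * κ ^ (D / f))) ^ m + p ^ (m + 1)) ≤
    (cnt (compat p H) (fun M => ∃ x : Fin n → ℤ,
        M.mulVec (fun j => ((x j : ℤ) : ZMod p)) = s ∧ intNorm x ≤ r) : ℝ) / (compat p H).card := by
  classical
  have hp0 : (0 : ℝ) < p := by exact_mod_cast (Fact.out : p.Prime).pos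
  have hp1 : (1 : ℝ) ≤ p := by exact_mod_cast (Fact.out : p.Prime).one_lt.le
  have hr0 : 0 ≤ r := le_trans (by positivity) hr
  set V := ballVol n * (r + √n / 2) ^ n with hV
  have hV0' : 0 ≤ V := by have := ballVol_pos n; positivity
  set W : Finset (Fin n → ℤ) := (latBall_finite (Fin n) hr0).toFinset with hW
  have hmemW : ∀ y, y ∈ W ↔ y ∈ latBall (Fin n) r := fun y => by simp [W]
  -- points without zero coordinates; the others form `n` slices, negligible in number
  let B : Finset (Fin n → ℤ) := W.filter fun y => ∀ j, y j ≠ 0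
  have hbd : ∀ y ∈ B, ∀ j, |(y j : ℝ)| ≤ r := fun y hy j =>
    abs_le_of_mem_latBall hr0 ((hmemW y).1 (Finset.mem_filter.1 hy).1) j
  have hBne : ∀ y ∈ B, ∀ j, ((y j : ℤ) : ZMod p) ≠ 0 := by
    intro y hy j h0
    refine (Finset.mem_filter.1 hy).2 j (int_eq_of_cast_eq hrp (hbd y hy j) (by simpa using hr0) ?_)
    simpa using h0
  have hBcard : ballVol n * (r - √n / 2) ^ n - n * κ * V ≤ B.card := by
    have hWc : ballVol n * (r - √n / 2) ^ n ≤ (W.card : ℝ) := by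
      have := vol_le_latBall_ncard (Fin n) (r := r) (by simpa using hr)
      rw [Fintype.card_fin] at this
      rwa [hW, ← Set.ncard_eq_toFinset_card _ (latBall_finite (Fin n) hr0)]
    have hcov : W ⊆ B ∪ Finset.univ.biUnion fun j => W.filter fun y => y j = 0 := by
      intro y hy
      by_cases hall : ∀ j, y j ≠ 0
      · exact Finset.mem_union_left _ (Finset.mem_filter.2 ⟨hy, hall⟩)
      · push Not at hall
        obtain ⟨j, hj⟩ := hall
        exact Finset.mem_union_right _ (Finset.mem_biUnion.2 ⟨j, Finset.mem_univ _,
          Finset.mem_filter.2 ⟨hy, hj⟩⟩)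
    have hslice : ∀ j, ((W.filter fun y => y j = 0).card : ℝ) ≤ V * κ := by
      intro j
      have a := slice_ncard_le hr0 hrp {j} (0 : Fin n → ZMod p) (W.filter fun y => y j = 0)
        (fun y hy => (hmemW y).1 (Finset.mem_filter.1 hy).1)
        (fun y hy k hk => by
          rw [Finset.mem_singleton.1 hk, (Finset.mem_filter.1 hy).2]; simp)
      have b := slice_le_vol hr0 ({j} : Finset (Fin n)) hκ hκ0.le
      rw [Finset.card_singleton, pow_one] at b
      exact a.trans b
    have hc := (Finset.card_le_card hcov).trans ((Finset.card_union_le _ _).trans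
      (Nat.add_le_add_left Finset.card_biUnion_le _))
    have hc' : (W.card : ℝ) ≤ B.card + ∑ j : Fin n, ((W.filter fun y => y j = 0).card : ℝ) := by
      exact_mod_cast hc
    have hs' : ∑ j : Fin n, ((W.filter fun y => y j = 0).card : ℝ) ≤ n * (V * κ) := by
      refine (Finset.sum_le_sum fun j _ => hslice j).trans ?_
      simp
    linarith
  set b : ℝ := (2 * r + 1) * (2 * (p : ℝ) ^ (-(f * D))) with hb
  have hb0 : 0 ≤ b := by positivity
  have hE0 : 0 ≤ (1 + b) ^ n - 1 := by
    have := one_le_pow₀ (M₀ := ℝ) (a := 1 + b) (n := n) (by linarith)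
    linarith
  set T : ℝ := (V + p ^ (m + 1) * ((1 + b) ^ n - 1)) * (1 + p * (p * κ ^ (D / f))) ^ m +
    p ^ (m + 1) with hT
  have hT0 : 0 < T := by positivity
  have hBT : ∀ x ∈ B, ∑ y ∈ B, (p : ℝ) ^ parCount H (fun j => ((x j : ℤ) : ZMod p))
      Finset.univ y ≤ T := by
    intro x hx
    rw [← Finset.sum_filter_add_sum_filter_not B
      (fun y => ∀ c : ZMod p, ∃ j, ((y j : ℤ) : ZMod p) ≠ c * ((x j : ℤ) : ZMod p))]
    refine add_le_add ?_ ?_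
    · have := parCount_sum_le h hf hD h2 h3 (fun j => ((x j : ℤ) : ZMod p)) (hBne x hx)
        Finset.univ hr0 hrp hκ0 hκ1 hκ hκ'
        (B.filter (fun y => ∀ c : ZMod p, ∃ j, ((y j : ℤ) : ZMod p) ≠ c * ((x j : ℤ) : ZMod p)))
        (fun y hy => (hmemW y).1 (Finset.mem_filter.1 (Finset.mem_filter.1 hy).1).1)
        (fun y hy c _ => (Finset.mem_filter.1 hy).2 c)
      rw [Finset.card_univ, ZMod.card] at this
      refine this.trans (le_of_eq ?_)
      rw [pow_succ']
    · -- the multiples of `x` modulo `p`: at most `p` points, each of weight at most `p ^ m`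
      set Z := B.filter (fun y => ¬ ∀ c : ZMod p, ∃ j,
        ((y j : ℤ) : ZMod p) ≠ c * ((x j : ℤ) : ZMod p)) with hZ
      have hex : ∀ y ∈ Z, ∃ c : ZMod p, ∀ j, ((y j : ℤ) : ZMod p) = c * ((x j : ℤ) : ZMod p) := by
        intro y hy
        have := (Finset.mem_filter.1 hy).2
        push Not at this
        exact this
      choose! c hc using hex
      have hZc : Z.card ≤ p := by
        have := Finset.card_le_card_of_injOn (s := Z) (t := (Finset.univ : Finset (ZMod p))) c
          (fun _ _ => Finset.mem_coe.2 (Finset.mem_univ _)) (by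
            intro y hy y' hy' hcc
            funext j
            refine int_eq_of_cast_eq hrp (hbd y (Finset.mem_filter.1 hy).1 j)
              (hbd y' (Finset.mem_filter.1 hy').1 j) ?_
            rw [hc y hy j, hc y' hy' j, hcc])
        rwa [Finset.card_univ, ZMod.card] at this
      calc _ ≤ ∑ y ∈ Z, (p : ℝ) ^ m :=
            Finset.sum_le_sum fun y _ => pow_le_pow_right₀ hp1 (parCount_le _ _ _)
        _ = Z.card * (p : ℝ) ^ m := by rw [Finset.sum_const, nsmul_eq_mul]
        _ ≤ p * (p : ℝ) ^ m := by gcongr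
        _ = _ := by rw [pow_succ']
  have hP := prob_ge H s B hBne (h.exists_nbr hf hD h1) hT0 hBT
  refine (div_le_div_of_nonneg_right hBcard hT0.le).trans (hP.trans ?_)
  refine div_le_div_of_nonneg_right ?_ (by positivity)
  have : cnt (compat p H) (fun M => ∃ y ∈ B, M.mulVec (fun j => ((y j : ℤ) : ZMod p)) = s) ≤
      cnt (compat p H) (fun M => ∃ x : Fin n → ℤ,
        M.mulVec (fun j => ((x j : ℤ) : ZMod p)) = s ∧ intNorm x ≤ r) := by
    refine cnt_mono ?_
    rintro M - ⟨y, hy, hM⟩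
    exact ⟨y, hM, (intNorm_le_iff hr0 y).2 ((hmemW y).1 (Finset.mem_filter.1 hy).1)⟩
  exact_mod_cast this

end finite

/-! ### Bounds in terms of `n` and `p` -/

/-- The constant `√(2πe)` in the denominator of the effective radius. -/
noncomputable def sC : ℝ := √(2 * Real.pi * Real.exp 1)

lemma one_le_sC : 1 ≤ sC := by
  unfold sC
  rw [Real.one_le_sqrt]
  have h1 := Real.pi_gt_three
  have h2 := Real.one_lt_exp_iff.2 (zero_lt_one' ℝ)
  nlinarith

section norm
variable {m n p : ℕ} [Fact p.Prime] {H : Matrix (Fin m) (Fin n) Bool} {f D : ℝ}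

/-- The error terms `(1 + b)^n - 1` coming from large sets of parallel checks. -/
lemma box_term_le {r : ℝ} (hn : 1 ≤ n) (hf : 0 < f) (hr0 : 0 ≤ r)
    (hr : r ≤ 2 * (√n * (p : ℝ) ^ f / sC)) :
    (1 + (2 * r + 1) * (2 * (p : ℝ) ^ (-(f * D)))) ^ n - 1 ≤
      Real.exp (10 * (n * √n * (p : ℝ) ^ (f - f * D))) - 1 := by
  have hp1 : (1 : ℝ) ≤ p := by exact_mod_cast (Fact.out : p.Prime).one_lt.le
  have hp0 : (0 : ℝ) < p := by linarith
  have hn1 : (1 : ℝ) ≤ n := by exact_mod_cast hn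
  have hs1 : 1 ≤ √(n : ℝ) := Real.one_le_sqrt.2 hn1
  have hq1 : 1 ≤ (p : ℝ) ^ f := Real.one_le_rpow hp1 hf.le
  have h1 : √n * (p : ℝ) ^ f / sC ≤ √n * (p : ℝ) ^ f := div_le_self (by positivity) one_le_sC
  have h2 : 1 ≤ √n * (p : ℝ) ^ f := one_le_mul_of_one_le_of_one_le hs1 hq1
  have h3 : 2 * r + 1 ≤ 5 * (√n * (p : ℝ) ^ f) := by linarith
  have e : (p : ℝ) ^ (f - f * D) = (p : ℝ) ^ f * (p : ℝ) ^ (-(f * D)) := by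
    rw [← Real.rpow_add hp0]; ring_nf
  have h4 : (1 + (2 * r + 1) * (2 * (p : ℝ) ^ (-(f * D)))) ≤
      Real.exp (10 * (√n * (p : ℝ) ^ (f - f * D))) := by
    have := Real.add_one_le_exp (10 * (√n * (p : ℝ) ^ (f - f * D)))
    have h5 : (2 * r + 1) * (2 * (p : ℝ) ^ (-(f * D))) ≤ 10 * (√n * (p : ℝ) ^ (f - f * D)) := by
      calc _ ≤ 5 * (√n * (p : ℝ) ^ f) * (2 * (p : ℝ) ^ (-(f * D))) := by gcongr
        _ = _ := by rw [e]; ring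
    linarith
  have h6 := pow_le_pow_left₀ (by positivity) h4 n
  rw [← Real.exp_nat_mul] at h6
  have e2 : (n : ℝ) * (10 * (√n * (p : ℝ) ^ (f - f * D))) =
    10 * (n * √n * (p : ℝ) ^ (f - f * D)) := by ring
  rw [e2] at h6
  linarith

/-- The factor coming from the labellings of the checks. -/
lemma label_term_le (hf : 0 < f) (hm : (m : ℝ) ≤ n) :
    (1 + (p : ℝ) * (p * (2 * sC * (p : ℝ) ^ (-f)) ^ (D / f))) ^ m ≤
      Real.exp ((2 * sC) ^ (D / f) * (n * (p : ℝ) ^ (2 - D))) := by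
  have hp1 : (1 : ℝ) ≤ p := by exact_mod_cast (Fact.out : p.Prime).one_lt.le
  have hp0 : (0 : ℝ) < p := by linarith
  have hsC := one_le_sC
  have e : (p : ℝ) * (p * (2 * sC * (p : ℝ) ^ (-f)) ^ (D / f)) =
      (2 * sC) ^ (D / f) * (p : ℝ) ^ (2 - D) := by
    rw [Real.mul_rpow (by positivity) (by positivity), ← Real.rpow_mul hp0.le,
      sub_eq_add_neg, Real.rpow_add hp0, Real.rpow_two]
    have : -f * (D / f) = -D := by field_simp
    rw [this]; ring
  rw [e]
  have h4 := Real.add_one_le_exp ((2 * sC) ^ (D / f) * (p : ℝ) ^ (2 - D))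
  rw [add_comm] at h4
  have h6 := pow_le_pow_left₀ (by positivity) h4 m
  rw [← Real.exp_nat_mul] at h6
  refine h6.trans (Real.exp_le_exp.2 ?_)
  calc (m : ℝ) * ((2 * sC) ^ (D / f) * (p : ℝ) ^ (2 - D)) ≤
      n * ((2 * sC) ^ (D / f) * (p : ℝ) ^ (2 - D)) := by gcongr
    _ = _ := by ring

/-- `√n ≤ κ r` and `1 ≤ κ (2 r + 1)` for the choice `κ = 2 √(2πe) p^(-f)`. -/
lemma kappa_bounds {r : ℝ} (hn : 1 ≤ n) (hr : √n * (p : ℝ) ^ f / sC / 2 ≤ r) :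
    √n ≤ (2 * sC * (p : ℝ) ^ (-f)) * r ∧ 1 ≤ (2 * sC * (p : ℝ) ^ (-f)) * (2 * r + 1) := by
  have hp0 : (0 : ℝ) < p := by exact_mod_cast (Fact.out : p.Prime).pos
  have hn1 : (1 : ℝ) ≤ n := by exact_mod_cast hn
  have hs1 : 1 ≤ √(n : ℝ) := Real.one_le_sqrt.2 hn1
  have hsC : 0 < sC := zero_lt_one.trans_le one_le_sC
  have e : (p : ℝ) ^ (-f) * (p : ℝ) ^ f = 1 := by
    rw [← Real.rpow_add hp0]; simp
  have h1 : √n ≤ (2 * sC * (p : ℝ) ^ (-f)) * r := by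
    calc √(n : ℝ) = (2 * sC * (p : ℝ) ^ (-f)) * (√n * (p : ℝ) ^ f / sC / 2) := by
          field_simp
          linear_combination (-1 : ℝ) * e
      _ ≤ _ := by gcongr
  refine ⟨h1, ?_⟩
  have h2 : 0 < 2 * sC * (p : ℝ) ^ (-f) := by positivity
  nlinarith

lemma pow_m_eq (hm : (m : ℝ) = f * n) : ((p : ℝ) ^ f) ^ n = (p : ℝ) ^ m := by
  have hp0 : (0 : ℝ) < p := by exact_mod_cast (Fact.out : p.Prime).pos
  rw [← Real.rpow_natCast, ← Real.rpow_mul hp0.le, ← hm, Real.rpow_natCast]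

/-- Explicit bound for the probability of a solution of norm at most `ρ_eff (1 - δ)`: the expected
number of lattice points is at most `exp (-n δ)` up to the error from replacing points by volume,
and the other terms come from parallel checks. -/
lemma partI_bound (h : FinGood H f D) (hf : 0 < f) (hf1 : f < 1) (hD : 0 < D) (hn : 1 ≤ n)
    (hm : (m : ℝ) = f * n)
    (h2 : (p : ℝ) ^ (D ^ 2 + f * D) ≤ 2 ^ ((n : ℝ) / (D + 1)))
    (h3 : 2 * ((n : ℝ) / (D + 1) + D / f) < n)
    {δ : ℝ} (hδ0 : 0 ≤ δ) (hδ : δ ≤ 1 / 2) (hκ : 2 * sC * (p : ℝ) ^ (-f) ≤ 1)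
    (hrp : 4 * (√n * (p : ℝ) ^ f) < p) (s : Fin m → ZMod p) (hs : s ≠ 0) :
    (cnt (compat p H) (fun M => ∃ x : Fin n → ℤ,
        M.mulVec (fun j => ((x j : ℤ) : ZMod p)) = s ∧
          intNorm x ≤ √n * (p : ℝ) ^ f / sC * (1 - δ)) : ℝ) / (compat p H).card ≤
      (Real.exp (-(n * δ) + sC / 2 * (n * (p : ℝ) ^ (-f))) +
        (Real.exp (10 * (n * √n * (p : ℝ) ^ (f - f * D))) - 1)) *
      Real.exp ((2 * sC) ^ (D / f) * (n * (p : ℝ) ^ (2 - D))) := by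
  have hp1 : (1 : ℝ) ≤ p := by exact_mod_cast (Fact.out : p.Prime).one_lt.le
  have hp0 : (0 : ℝ) < p := by linarith
  have hsC : 0 < sC := zero_lt_one.trans_le one_le_sC
  set q := (p : ℝ) ^ f with hq
  have hq0 : 0 < q := by positivity
  set ρ := √n * q / sC with hρ
  have hρ0 : 0 ≤ ρ := by positivity
  have hρ1 : ρ ≤ √n * q := div_le_self (by positivity) one_le_sC
  have hr1 : ρ / 2 ≤ ρ * (1 - δ) := by nlinarith
  have hr2 : ρ * (1 - δ) ≤ 2 * ρ := by nlinarith
  have hr0 : 0 ≤ ρ * (1 - δ) := by linarith [half_pos (lt_of_lt_of_le one_pos one_le_sC)]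
  obtain ⟨k1, k2⟩ := kappa_bounds (p := p) (f := f) (r := ρ * (1 - δ)) hn hr1
  have key := exists_prob_le h hf hD h2 h3 hr0 (by linarith) (by positivity) hκ k1 k2 s hs
  refine key.trans ?_
  have hmn : (m : ℝ) ≤ n := by
    rw [hm]; nlinarith [(Nat.cast_nonneg n : (0 : ℝ) ≤ n)]
  have hV : ballVol n * (ρ * (1 - δ) + √n / 2) ^ n * ((p : ℝ) ^ m)⁻¹ ≤
      Real.exp (-(n * δ) + sC / 2 * (n * (p : ℝ) ^ (-f))) := by
    have e1 : ρ * (1 - δ) + √n / 2 =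
        √n * (q * (1 - δ + sC / 2 * (p : ℝ) ^ (-f))) / sC := by
      rw [hρ, Real.rpow_neg hp0.le, ← hq]; field_simp
    have h4 : 0 ≤ 1 - δ + sC / 2 * (p : ℝ) ^ (-f) := by
      have : 0 ≤ sC / 2 * (p : ℝ) ^ (-f) := by positivity
      linarith
    have h5 := ballVol_mul_pow_le n (q := q * (1 - δ + sC / 2 * (p : ℝ) ^ (-f))) (by positivity)
    change ballVol n * (√n * (q * (1 - δ + sC / 2 * (p : ℝ) ^ (-f))) / sC) ^ n ≤ _ at h5
    rw [e1]
    calc _ ≤ (q * (1 - δ + sC / 2 * (p : ℝ) ^ (-f))) ^ n * ((p : ℝ) ^ m)⁻¹ := by gcongr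
      _ = (1 - δ + sC / 2 * (p : ℝ) ^ (-f)) ^ n := by
        rw [mul_pow, hq, pow_m_eq hm]; field_simp
      _ ≤ (Real.exp (-δ + sC / 2 * (p : ℝ) ^ (-f))) ^ n := by
        refine pow_le_pow_left₀ h4 ?_ n
        have := Real.add_one_le_exp (-δ + sC / 2 * (p : ℝ) ^ (-f))
        linarith
      _ = _ := by rw [← Real.exp_nat_mul]; congr 1; ring
  have hE := box_term_le (p := p) (D := D) hn hf hr0 hr2
  have hE0 : 0 ≤ (1 + (2 * (ρ * (1 - δ)) + 1) * (2 * (p : ℝ) ^ (-(f * D)))) ^ n - 1 := by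
    have : 0 ≤ (2 * (ρ * (1 - δ)) + 1) * (2 * (p : ℝ) ^ (-(f * D))) := by positivity
    have := one_le_pow₀ (n := n) (by linarith :
      1 ≤ 1 + (2 * (ρ * (1 - δ)) + 1) * (2 * (p : ℝ) ^ (-(f * D))))
    linarith
  have hG : (1 + (p : ℝ) * (2 * sC * (p : ℝ) ^ (-f)) ^ (D / f)) ^ m ≤
      Real.exp ((2 * sC) ^ (D / f) * (n * (p : ℝ) ^ (2 - D))) := by
    refine le_trans ?_ (label_term_le (p := p) hf hmn)
    gcongr
    exact le_mul_of_one_le_left (by positivity) hp1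
  exact mul_le_mul (add_le_add hV hE) hG (by positivity)
    (add_nonneg (Real.exp_pos _).le (hE0.trans hE))

set_option maxHeartbeats 1000000 in
/-- Explicit bound for the probability of a solution of norm at most `ρ_eff (1 + δ)`. Here `N` is
the relative error of replacing lattice points by volume and of removing the points with a zero
coordinate, and `η` bounds `p ^ (m + 1)` relative to the volume of the ball. -/
lemma partII_bound (h : FinGood H f D) (hf : 0 < f) (hf1 : f < 1) (hD : 0 < D) (hn : 1 ≤ n)
    (hm : (m : ℝ) = f * n) (h1 : 1 ≤ f * n / (D + 1))
    (h2 : (p : ℝ) ^ (D ^ 2 + f * D) ≤ 2 ^ ((n : ℝ) / (D + 1)))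
    (h3 : 2 * ((n : ℝ) / (D + 1) + D / f) < n)
    {δ : ℝ} (hδ0 : 0 ≤ δ) (hδ : δ ≤ 1 / 2) (hκ : 2 * sC * (p : ℝ) ^ (-f) ≤ 1)
    (hrp : 4 * (√n * (p : ℝ) ^ f) < p) (s : Fin m → ZMod p)
    {N η : ℝ} (hN : N = 2 * sC * (n * (p : ℝ) ^ (-f)))
    (hη : η = 5 * (n * p * Real.exp (-(n * δ / 2))))
    (hN1 : 0 ≤ 1 - N - N * Real.exp N) :
    (1 - N - N * Real.exp N) /
      ((Real.exp N + η * (Real.exp (10 * (n * √n * (p : ℝ) ^ (f - f * D))) - 1)) *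
      Real.exp ((2 * sC) ^ (D / f) * (n * (p : ℝ) ^ (2 - D))) + η) ≤
    (cnt (compat p H) (fun M => ∃ x : Fin n → ℤ,
        M.mulVec (fun j => ((x j : ℤ) : ZMod p)) = s ∧
          intNorm x ≤ √n * (p : ℝ) ^ f / sC * (1 + δ)) : ℝ) / (compat p H).card := by
  have hp1 : (1 : ℝ) ≤ p := by exact_mod_cast (Fact.out : p.Prime).one_lt.le
  have hp0 : (0 : ℝ) < p := by linarith
  have hn1 : (1 : ℝ) ≤ n := by exact_mod_cast hn
  have hsC : 0 < sC := zero_lt_one.trans_le one_le_sC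
  set q := (p : ℝ) ^ f with hq
  have hq0 : 0 < q := by positivity
  set ρ := √n * q / sC with hρ
  have hs0 : 0 < √(n : ℝ) := Real.sqrt_pos.2 (by linarith)
  have hρ0 : 0 < ρ := by positivity
  have hρ1 : ρ ≤ √n * q := div_le_self (by positivity) one_le_sC
  set r := ρ * (1 + δ) with hr
  have hr1 : ρ / 2 ≤ r := by nlinarith
  have hr2 : r ≤ 2 * ρ := by nlinarith
  have hr0 : 0 < r := by linarith
  obtain ⟨k1, k2⟩ := kappa_bounds (p := p) (f := f) (r := r) hn hr1
  set κ := 2 * sC * (p : ℝ) ^ (-f) with hκd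
  have hκ0 : 0 < κ := by positivity
  have hNκ : N = n * κ := by rw [hN, hκd]; ring
  have hN0 : 0 ≤ N := by rw [hNκ]; positivity
  have hsr : √n ≤ r := k1.trans (by nlinarith)
  have key := le_exists_prob h hf hD h1 h2 h3 (r := r) (by linarith) (by linarith) hκ0 hκ k1 k2 s
  refine le_trans ?_ key
  have hmn : (m : ℝ) ≤ n := by
    rw [hm]; nlinarith [(Nat.cast_nonneg n : (0 : ℝ) ≤ n)]
  have hE := box_term_le (p := p) (D := D) hn hf hr0.le hr2
  have hE0 : 0 ≤ (1 + (2 * r + 1) * (2 * (p : ℝ) ^ (-(f * D)))) ^ n - 1 := by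
    have : 0 ≤ (2 * r + 1) * (2 * (p : ℝ) ^ (-(f * D))) := by positivity
    have := one_le_pow₀ (n := n) (by linarith :
      1 ≤ 1 + (2 * r + 1) * (2 * (p : ℝ) ^ (-(f * D))))
    linarith
  have hG : (1 + (p : ℝ) * (p * κ ^ (D / f))) ^ m ≤
      Real.exp ((2 * sC) ^ (D / f) * (n * (p : ℝ) ^ (2 - D))) := label_term_le (p := p) hf hmn
  set E := (1 + (2 * r + 1) * (2 * (p : ℝ) ^ (-(f * D)))) ^ n - 1
  set G := (1 + (p : ℝ) * (p * κ ^ (D / f))) ^ m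
  set E' := Real.exp (10 * (n * √n * (p : ℝ) ^ (f - f * D))) - 1
  set G' := Real.exp ((2 * sC) ^ (D / f) * (n * (p : ℝ) ^ (2 - D)))
  -- all quantities are compared with the volume `V0` of the ball
  set V0 := ballVol n * r ^ n with hV0d
  have hV0 : 0 < V0 := by have := ballVol_pos n; positivity
  have ht : √n / (2 * r) ≤ κ / 2 := by
    rw [div_le_div_iff₀ (by positivity) (by norm_num)]; linarith
  have hVp : ballVol n * (r + √n / 2) ^ n ≤ V0 * Real.exp N := by
    have e : r + √n / 2 = r * (1 + √n / (2 * r)) := by field_simp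
    rw [e, mul_pow, ← mul_assoc]
    refine mul_le_mul_of_nonneg_left ?_ hV0.le
    calc (1 + √n / (2 * r)) ^ n ≤ (Real.exp κ) ^ n := by
          refine pow_le_pow_left₀ (by positivity) ?_ n
          have := Real.add_one_le_exp κ
          linarith
      _ = _ := by rw [← Real.exp_nat_mul, hNκ]
  have hVm : V0 * (1 - N) ≤ ballVol n * (r - √n / 2) ^ n := by
    have e : r - √n / 2 = r * (1 + -(√n / (2 * r))) := by field_simp; ring
    rw [e, mul_pow, ← mul_assoc]
    refine mul_le_mul_of_nonneg_left ?_ hV0.le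
    have h0 : 0 ≤ √n / (2 * r) := by positivity
    have := one_add_mul_le_pow (a := -(√n / (2 * r))) (by linarith) n
    refine le_trans ?_ this
    have h9 : (n : ℝ) * (√n / (2 * r)) ≤ n * (κ / 2) := by gcongr
    rw [hNκ] at hN0 ⊢
    linarith
  have hη0 : 0 < η := by rw [hη]; positivity
  have hPm : (p : ℝ) ^ (m + 1) ≤ V0 * η := by
    have h5 := le_ballVol_mul_pow n hn (q := q * (1 + δ)) (by positivity)
    have e : √n * (q * (1 + δ)) / √(2 * Real.pi * Real.exp 1) = r := by
      change √n * (q * (1 + δ)) / sC = r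
      rw [hr, hρ]; ring
    rw [e, mul_pow, hq, pow_m_eq hm, div_le_iff₀ (by positivity)] at h5
    have h6 : Real.exp (δ / 2) ≤ 1 + δ := by
      have a := Real.add_one_le_exp (-(δ / 2))
      have b : Real.exp (δ / 2) * Real.exp (-(δ / 2)) = 1 := by rw [← Real.exp_add]; simp
      have c := Real.exp_pos (δ / 2)
      have d : Real.exp (δ / 2) * (1 - δ / 2) ≤ 1 := by nlinarith
      have e' : 1 ≤ (1 + δ) * (1 - δ / 2) := by nlinarith
      have g : 0 < 1 - δ / 2 := by linarith
      exact le_of_mul_le_mul_right (d.trans e') g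
    have h7 : Real.exp (n * δ / 2) ≤ (1 + δ) ^ n := by
      have := pow_le_pow_left₀ (Real.exp_pos _).le h6 n
      rw [← Real.exp_nat_mul] at this
      rwa [← mul_div_assoc] at this
    have h8 : (p : ℝ) ^ m * Real.exp (n * δ / 2) ≤ V0 * (5 * n) :=
      le_trans (by gcongr) h5
    have h9 : Real.exp (n * δ / 2) * Real.exp (-(n * δ / 2)) = 1 := by
      rw [← Real.exp_add]; simp
    calc (p : ℝ) ^ (m + 1) = ((p : ℝ) ^ m * Real.exp (n * δ / 2)) * (p * Real.exp (-(n * δ / 2))) := by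
          rw [pow_succ]; linear_combination (-(p : ℝ) ^ m * p) * h9
      _ ≤ (V0 * (5 * n)) * (p * Real.exp (-(n * δ / 2))) := by gcongr
      _ = _ := by rw [hη]; ring
  have hnum : V0 * (1 - N - N * Real.exp N) ≤
      ballVol n * (r - √n / 2) ^ n - n * κ * (ballVol n * (r + √n / 2) ^ n) := by
    have : n * κ * (ballVol n * (r + √n / 2) ^ n) ≤ N * (V0 * Real.exp N) := by
      rw [← hNκ]; gcongr
    linarith
  have hVp0 : 0 ≤ ballVol n * (r + √n / 2) ^ n := by have := ballVol_pos n; positivity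
  have hden : (ballVol n * (r + √n / 2) ^ n + p ^ (m + 1) * E) * G + p ^ (m + 1) ≤
      V0 * ((Real.exp N + η * E') * G' + η) := by
    have hG0 : 0 ≤ G := by positivity
    have hE0' : 0 ≤ E' := hE0.trans hE
    calc _ ≤ (V0 * Real.exp N + V0 * η * E') * G' + V0 * η := by gcongr
      _ = _ := by ring
  have hden0 : 0 < (ballVol n * (r + √n / 2) ^ n + (p : ℝ) ^ (m + 1) * E) * G + p ^ (m + 1) := by
    have hG0 : 0 ≤ G := by positivity
    positivity
  have e : (1 - N - N * Real.exp N) / ((Real.exp N + η * E') * G' + η) =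
      (V0 * (1 - N - N * Real.exp N)) / (V0 * ((Real.exp N + η * E') * G' + η)) := by
    rw [mul_div_mul_left _ _ hV0.ne']
  rw [e]
  exact div_le_div₀ (le_trans (by positivity) hnum) hnum hden0 hden

end norm

/-! ### Asymptotics -/

section asymptotics
variable {p : ℕ → ℕ} {lam : ℝ}

lemma tendsto_ratio_rpow (hpn : Tendsto (fun n : ℕ => (p n : ℝ) / (n : ℝ) ^ lam) atTop (nhds 1))
    (e : ℝ) : Tendsto (fun n : ℕ => ((p n : ℝ) / (n : ℝ) ^ lam) ^ e) atTop (nhds 1) := by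
  have := (Real.continuousAt_rpow_const (1 : ℝ) e (Or.inl one_ne_zero)).tendsto.comp hpn
  simpa [Function.comp_def] using this

lemma rpow_split (n : ℕ) (hn : 1 ≤ n) (α e : ℝ) :
    (n : ℝ) ^ α * (p n : ℝ) ^ e =
      ((p n : ℝ) / (n : ℝ) ^ lam) ^ e * (n : ℝ) ^ (α + lam * e) := by
  have hn0 : (0 : ℝ) < n := by exact_mod_cast hn
  rw [Real.div_rpow (by positivity) (by positivity), Real.rpow_add hn0, Real.rpow_mul hn0.le]
  have : 0 < ((n : ℝ) ^ lam) ^ e := by positivity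
  field_simp

/-- Monomials in `n` and `p(n) ~ n^λ` tend to zero when their total degree is negative. -/
lemma tendsto_monomial (hpn : Tendsto (fun n : ℕ => (p n : ℝ) / (n : ℝ) ^ lam) atTop (nhds 1))
    {α e : ℝ} (h : α + lam * e < 0) :
    Tendsto (fun n : ℕ => (n : ℝ) ^ α * (p n : ℝ) ^ e) atTop (nhds 0) := by
  have h1 : Tendsto (fun n : ℕ => (n : ℝ) ^ (α + lam * e)) atTop (nhds 0) := by
    have := (tendsto_rpow_neg_atTop (y := -(α + lam * e)) (by linarith)).comp
      tendsto_natCast_atTop_atTop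
    simpa [Function.comp_def] using this
  have h2 := (tendsto_ratio_rpow hpn e).mul h1
  rw [mul_zero] at h2
  refine h2.congr' ?_
  filter_upwards [eventually_ge_atTop 1] with n hn
  rw [rpow_split n hn]

/-- A stretched exponential beats every monomial in `n` and `p(n)`. -/
lemma tendsto_monomial_exp
    (hpn : Tendsto (fun n : ℕ => (p n : ℝ) / (n : ℝ) ^ lam) atTop (nhds 1))
    (α e : ℝ) {β γ : ℝ} (hβ : 0 < β) (hγ : 0 < γ) :
    Tendsto (fun n : ℕ => (n : ℝ) ^ α * (p n : ℝ) ^ e * Real.exp (-β * (n : ℝ) ^ γ))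
      atTop (nhds 0) := by
  have h1 : Tendsto (fun n : ℕ => (n : ℝ) ^ γ) atTop atTop :=
    (tendsto_rpow_atTop hγ).comp tendsto_natCast_atTop_atTop
  have h3 := (tendsto_rpow_mul_exp_neg_mul_atTop_nhds_zero ((α + lam * e) / γ) β hβ).comp h1
  have h2 := (tendsto_ratio_rpow hpn e).mul h3
  rw [mul_zero] at h2
  refine h2.congr' ?_
  filter_upwards [eventually_ge_atTop 1] with n hn
  rw [rpow_split (lam := lam) n hn]
  have : ((n : ℝ) ^ γ) ^ ((α + lam * e) / γ) = (n : ℝ) ^ (α + lam * e) := by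
    rw [← Real.rpow_mul (by positivity)]; congr 1; field_simp
  simp only [Function.comp, this]
  ring

end asymptotics

/-- The events of the statement as events in the sample space `compat p H`. -/
lemma ncard_compat {p m n : ℕ} [NeZero p] (H : Matrix (Fin m) (Fin n) Bool)
    (Φ : Matrix (Fin m) (Fin n) (ZMod p) → Prop) :
    Set.ncard {M : Matrix (Fin m) (Fin n) (ZMod p) | (∀ i j, H i j = false → M i j = 0) ∧ Φ M} =
      cnt (compat p H) Φ := by
  classical
  rw [cnt_eq, ← Set.ncard_coe_finset]
  congr 1
  ext M
  rw [Set.mem_ofPred_eq, Finset.mem_coe, Finset.mem_filter, mem_compat]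

lemma cnt_or_le {α : Type*} {s : Finset α} {Q Q' Q'' : α → Prop}
    (h : ∀ a ∈ s, Q a → Q' a ∨ Q'' a) : cnt s Q ≤ cnt s Q' + cnt s Q'' := by
  classical
  rw [cnt_eq, cnt_eq, cnt_eq]
  refine (Finset.card_le_card ?_).trans (Finset.card_union_le _ _)
  intro a ha
  rw [Finset.mem_filter] at ha
  rw [Finset.mem_union, Finset.mem_filter, Finset.mem_filter]
  exact (h a ha.1 ha.2).imp (fun hh => ⟨ha.1, hh⟩) fun hh => ⟨ha.1, hh⟩

/-- **Typical norm of an LDA constellation point.**  Fix rationals `0 < R < R_f < 1`,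
`D > max{1/(1−R_f), 2}`, `ω ∈ (0,1)` and
`λ > max{1/(D(1−R_f)−1), 1/(2R), 1/(1−R), 1/(D−2), (1 − 1/(D²−1) − 1/(D(1−R)))⁻¹}`.
Let `p(n)` be primes with `p(n)/n^λ → 1`, restrict to `n` with `n(1−R), n(1−R_f) ∈ ℕ`
(i.e. `m n = n(1−R)` and `mf n = n(1−R_f)`).  Let `H(n)` be skeleton matrices whose Tanner
graph is `D`-good (ratio `1−R`) and whose submatrix of the last `mf n` rows has a `D`-good
Tanner graph (ratio `1−R_f`), let `ℍ(n)` be the associated random matrix over `𝔽_{p(n)}`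
(uniform entries on the support of `H(n)`, zero elsewhere; the sample space of compatible
matrices has cardinality `p^{#ones}`), and let `s(n)` be any nonzero syndrome.  With
`ρ_eff(n) = √n·p(n)^{1−R}/√(2πe)`: (i) the probability that some `x ∈ ℤⁿ` with
`‖x‖ ≤ ρ_eff(n)(1−n^{−ω})` has `ℍx ≡ s(n)` tends to 0; (ii) the probability that some `x`
with `‖x‖ ≤ ρ_eff(n)(1+n^{−ω})` has `ℍx ≡ s(n)` tends to 1; (iii) consequently, with
probability tending to 1, every minimum-norm solution has norm within
`ρ_eff(n)(1 ± n^{−ω})`. -/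
theorem lda_typical_norm
    (R Rf : ℚ) (hR : 0 < R ∧ R < Rf ∧ Rf < 1)
    (D ω lam : ℝ) (hD : max (1 / (1 - (Rf : ℝ))) 2 < D) (hω : 0 < ω ∧ ω < 1)
    (hlam : max (max (1 / (D * (1 - (Rf : ℝ)) - 1)) (1 / (2 * (R : ℝ))))
        (max (max (1 / (1 - (R : ℝ))) (1 / (D - 2)))
          ((1 - 1 / (D ^ 2 - 1) - 1 / (D * (1 - (R : ℝ))))⁻¹)) < lam)
    (p : ℕ → ℕ) (hp : ∀ n, (p n).Prime)
    (hpn : Tendsto (fun n : ℕ => (p n : ℝ) / (n : ℝ) ^ lam) atTop (nhds 1))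
    (m mf : ℕ → ℕ)
    (H : (n : ℕ) → Matrix (Fin (m n)) (Fin n) Bool)
    (hgood : ∀ n : ℕ, (m n : ℚ) = (n : ℚ) * (1 - R) → (mf n : ℚ) = (n : ℚ) * (1 - Rf) →
      TannerDGood (H n) (1 - (R : ℝ)) D ∧ TannerSubDGood (H n) (mf n) (1 - (Rf : ℝ)) D)
    (s : (n : ℕ) → Fin (m n) → ZMod (p n)) (hs : ∀ n, s n ≠ 0) :
    (Tendsto
      (fun n : ℕ =>
        (Set.ncard {M : Matrix (Fin (m n)) (Fin n) (ZMod (p n)) |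
            (∀ i j, H n i j = false → M i j = 0) ∧
            ∃ x : Fin n → ℤ,
              M.mulVec (fun j => ((x j : ℤ) : ZMod (p n))) = s n ∧
              intNorm x ≤ rhoEff (p n) n R * (1 - (n : ℝ) ^ (-ω))} : ℝ)
          / (p n : ℝ) ^ (Set.ncard {q : Fin (m n) × Fin n | H n q.1 q.2 = true}))
      (atTop ⊓ Filter.principal
        {n : ℕ | (m n : ℚ) = (n : ℚ) * (1 - R) ∧ (mf n : ℚ) = (n : ℚ) * (1 - Rf)})
      (nhds 0)) ∧
    (Tendsto
      (fun n : ℕ =>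
        (Set.ncard {M : Matrix (Fin (m n)) (Fin n) (ZMod (p n)) |
            (∀ i j, H n i j = false → M i j = 0) ∧
            ∃ x : Fin n → ℤ,
              M.mulVec (fun j => ((x j : ℤ) : ZMod (p n))) = s n ∧
              intNorm x ≤ rhoEff (p n) n R * (1 + (n : ℝ) ^ (-ω))} : ℝ)
          / (p n : ℝ) ^ (Set.ncard {q : Fin (m n) × Fin n | H n q.1 q.2 = true}))
      (atTop ⊓ Filter.principal
        {n : ℕ | (m n : ℚ) = (n : ℚ) * (1 - R) ∧ (mf n : ℚ) = (n : ℚ) * (1 - Rf)})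
      (nhds 1)) ∧
    (Tendsto
      (fun n : ℕ =>
        (Set.ncard {M : Matrix (Fin (m n)) (Fin n) (ZMod (p n)) |
            (∀ i j, H n i j = false → M i j = 0) ∧
            ∀ x : Fin n → ℤ,
              M.mulVec (fun j => ((x j : ℤ) : ZMod (p n))) = s n →
              (∀ z : Fin n → ℤ,
                M.mulVec (fun j => ((z j : ℤ) : ZMod (p n))) = s n →
                  intNorm x ≤ intNorm z) →
              rhoEff (p n) n R * (1 - (n : ℝ) ^ (-ω)) ≤ intNorm x ∧
                intNorm x ≤ rhoEff (p n) n R * (1 + (n : ℝ) ^ (-ω))} : ℝ)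
          / (p n : ℝ) ^ (Set.ncard {q : Fin (m n) × Fin n | H n q.1 q.2 = true}))
      (atTop ⊓ Filter.principal
        {n : ℕ | (m n : ℚ) = (n : ℚ) * (1 - R) ∧ (mf n : ℚ) = (n : ℚ) * (1 - Rf)})
      (nhds 1)) := by
  obtain ⟨hR0, hRRf, hRf1⟩ := hR
  have hR0' : (0 : ℝ) < R := by exact_mod_cast hR0
  have hRRf' : (R : ℝ) < Rf := by exact_mod_cast hRRf
  have hRf1' : (Rf : ℝ) < 1 := by exact_mod_cast hRf1
  obtain ⟨hDa, hDb⟩ := max_lt_iff.1 hD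
  obtain ⟨hl1, hl2⟩ := max_lt_iff.1 hlam
  obtain ⟨hl11, hl12⟩ := max_lt_iff.1 hl1
  obtain ⟨hl21, -⟩ := max_lt_iff.1 hl2
  obtain ⟨hl211, hl212⟩ := max_lt_iff.1 hl21
  set l := (atTop ⊓ Filter.principal
        {n : ℕ | (m n : ℚ) = (n : ℚ) * (1 - R) ∧ (mf n : ℚ) = (n : ℚ) * (1 - Rf)}) with hl
  have hle : l ≤ atTop := inf_le_left
  obtain ⟨f, hf⟩ : ∃ f : ℝ, f = 1 - (R : ℝ) := ⟨_, rfl⟩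
  have hf0 : 0 < f := by linarith
  have hf1 : f < 1 := by linarith
  have hD0 : 0 < D := by linarith
  have hlR : 1 < lam * (2 * R) := by rwa [div_lt_iff₀ (by positivity)] at hl12
  have hlf : 1 < lam * f := by rwa [← hf, div_lt_iff₀ (by positivity)] at hl211
  have hlD : 1 < lam * (D - 2) := by rwa [div_lt_iff₀ (by linarith)] at hl212
  have hDRf : 1 < D * (1 - Rf) := by rwa [div_lt_iff₀ (by linarith)] at hDa
  have hlDf : 1 < lam * (D * (1 - Rf) - 1) := by rwa [div_lt_iff₀ (by linarith)] at hl11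
  have hlam0 : 0 < lam := by
    by_contra hcon
    nlinarith
  -- degree of `n^(3/2) p^(f - f D)`, using `R < R_f` and `1 < 2 λ R`
  have hl4 : 3 / 2 + lam * (f - f * D) < 0 := by
    have : lam * (D * (1 - Rf)) < lam * (D * f) := by
      have : D * (1 - (Rf : ℝ)) < D * f := by rw [hf]; nlinarith
      nlinarith
    rw [hf] at *
    nlinarith
  have : ∀ n, Fact (p n).Prime := fun n => ⟨hp n⟩
  have hP1 : ∀ n, (1 : ℝ) ≤ p n := fun n => by exact_mod_cast (hp n).one_lt.le
  have hP0 : ∀ n, (0 : ℝ) < p n := fun n => by linarith [hP1 n]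
  have t1 : Tendsto (fun n : ℕ => (n : ℝ) * (p n : ℝ) ^ (-f)) atTop (nhds 0) := by
    simpa using tendsto_monomial hpn (α := 1) (e := -f) (by linarith)
  have t2 : Tendsto (fun n : ℕ => √(n : ℝ) * (p n : ℝ) ^ (f - 1)) atTop (nhds 0) := by
    simp_rw [Real.sqrt_eq_rpow]
    exact tendsto_monomial hpn (by rw [hf]; linarith)
  have t3 : Tendsto (fun n : ℕ => (n : ℝ) * (p n : ℝ) ^ (2 - D)) atTop (nhds 0) := by
    simpa using tendsto_monomial hpn (α := 1) (e := 2 - D) (by linarith)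
  have t4 : Tendsto (fun n : ℕ => (n : ℝ) * √n * (p n : ℝ) ^ (f - f * D)) atTop (nhds 0) := by
    refine (tendsto_monomial hpn hl4).congr' ?_
    filter_upwards [eventually_ge_atTop 1] with n hn
    have hn0 : (0 : ℝ) < n := by exact_mod_cast hn
    rw [Real.sqrt_eq_rpow, show (3 / 2 : ℝ) = 1 + 1 / 2 by norm_num, Real.rpow_add hn0,
      Real.rpow_one]
  have t5 : Tendsto (fun n : ℕ => (p n : ℝ) ^ (-f)) atTop (nhds 0) := by
    simpa using tendsto_monomial hpn (α := 0) (e := -f) (by linarith)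
  have t6 := tendsto_monomial_exp hpn 0 (D ^ 2 + f * D) (β := Real.log 2 / (D + 1)) (γ := 1)
    (by have := Real.log_pos one_lt_two; positivity) one_pos
  have hω1 : 0 < 1 - ω := by linarith [hω.2]
  have enω : ∀ n : ℕ, 1 ≤ n → (n : ℝ) * (n : ℝ) ^ (-ω) = (n : ℝ) ^ (1 - ω) := by
    intro n hn
    have hn0 : (0 : ℝ) < n := by exact_mod_cast hn
    rw [sub_eq_add_neg, Real.rpow_add hn0, Real.rpow_one]
  have t7 : Tendsto (fun n : ℕ => 5 * ((n : ℝ) * p n * Real.exp (-(n * (n : ℝ) ^ (-ω) / 2))))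
      atTop (nhds 0) := by
    have := (tendsto_monomial_exp hpn 1 1 (β := 1 / 2) (by norm_num) hω1).const_mul 5
    rw [mul_zero] at this
    refine this.congr' ?_
    filter_upwards [eventually_ge_atTop 1] with n hn
    rw [enω n hn, Real.rpow_one, Real.rpow_one]
    congr 3
    ring
  have t8 : Tendsto (fun n : ℕ => (n : ℝ) * (n : ℝ) ^ (-ω)) atTop atTop := by
    refine ((tendsto_rpow_atTop hω1).comp tendsto_natCast_atTop_atTop).congr' ?_
    filter_upwards [eventually_ge_atTop 1] with n hn
    exact (enω n hn).symm
  have t9 : Tendsto (fun n : ℕ => (n : ℝ) ^ (-ω)) atTop (nhds 0) :=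
    (tendsto_rpow_neg_atTop hω.1).comp tendsto_natCast_atTop_atTop
  have tn : Tendsto (fun n : ℕ => (n : ℝ)) atTop atTop := tendsto_natCast_atTop_atTop
  have tN : Tendsto (fun n : ℕ => 2 * sC * ((n : ℝ) * (p n : ℝ) ^ (-f))) atTop (nhds 0) := by
    simpa using t1.const_mul (2 * sC)
  have texp : ∀ {g : ℕ → ℝ}, Tendsto g atTop (nhds 0) →
      Tendsto (fun n => Real.exp (g n)) atTop (nhds 1) := fun h => by
    simpa [Function.comp_def] using (Real.continuous_exp.tendsto 0).comp h
  have tE : Tendsto (fun n : ℕ => Real.exp (10 * (n * √n * (p n : ℝ) ^ (f - f * D))) - 1)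
      atTop (nhds 0) := by
    simpa using (texp (by simpa using t4.const_mul 10)).sub_const 1
  have tG : Tendsto (fun n : ℕ => Real.exp ((2 * sC) ^ (D / f) * (n * (p n : ℝ) ^ (2 - D))))
      atTop (nhds 1) := texp (by simpa using t3.const_mul ((2 * sC) ^ (D / f)))
  -- the hypotheses of the two explicit bounds hold for all large admissible `n`
  have hev : ∀ᶠ n in l, 1 ≤ n ∧ (m n : ℝ) = f * n ∧ FinGood (H n) f D ∧
      1 ≤ f * n / (D + 1) ∧ (p n : ℝ) ^ (D ^ 2 + f * D) ≤ 2 ^ ((n : ℝ) / (D + 1)) ∧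
      2 * ((n : ℝ) / (D + 1) + D / f) < n ∧ (n : ℝ) ^ (-ω) ≤ 1 / 2 ∧
      2 * sC * (p n : ℝ) ^ (-f) ≤ 1 ∧ 4 * (√n * (p n : ℝ) ^ f) < p n := by
    have hmem : ∀ᶠ n in l, (m n : ℚ) = (n : ℚ) * (1 - R) ∧ (mf n : ℚ) = (n : ℚ) * (1 - Rf) :=
      hl ▸ mem_inf_of_right (mem_principal_self _)
    have e5 : Tendsto (fun n : ℕ => 2 * sC * (p n : ℝ) ^ (-f)) atTop (nhds 0) := by
      simpa using t5.const_mul (2 * sC)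
    filter_upwards [hmem, hle (eventually_ge_atTop 1),
      hle (tn.eventually_ge_atTop ((D + 1) / f)),
      hle (t6.eventually_le_const one_pos),
      hle (tn.eventually_gt_atTop (2 * D / f * (D + 1) / (D - 1))),
      hle (t9.eventually_le_const (by norm_num : (0 : ℝ) < 1 / 2)),
      hle (e5.eventually_le_const one_pos),
      hle (t2.eventually_lt_const (by norm_num : (0 : ℝ) < 1 / 4))]
      with n hm hn b1 b2 b3 b4 b5 b6
    have hn0 : (0 : ℝ) < n := by exact_mod_cast hn
    refine ⟨hn, ?_, ?_, ?_, ?_, ?_, b4, b5, ?_⟩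
    · have := hm.1
      rify at this
      rw [this, hf]; ring
    · rw [hf]; exact (hgood n hm.1 hm.2).1.finGood
    · rw [le_div_iff₀ (by linarith)]
      rw [div_le_iff₀ hf0] at b1
      linarith
    · have e1 : (2 : ℝ) ^ ((n : ℝ) / (D + 1)) * Real.exp (-(Real.log 2 / (D + 1)) * (n : ℝ) ^ (1 : ℝ))
          = 1 := by
        rw [Real.rpow_def_of_pos two_pos, ← Real.exp_add, Real.rpow_one]
        rw [show Real.log 2 * (n / (D + 1)) + -(Real.log 2 / (D + 1)) * n = 0 by ring]
        simp
      rw [Real.rpow_zero, one_mul] at b2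
      exact le_of_mul_le_mul_right (b2.trans e1.ge) (Real.exp_pos _)
    · rw [div_lt_iff₀ (by linarith)] at b3
      have hD1 : 0 < D + 1 := by linarith
      have e1 : 2 * ((n : ℝ) / (D + 1) + D / f) = (2 * n + 2 * D / f * (D + 1)) / (D + 1) := by
        field_simp
      rw [e1, div_lt_iff₀ hD1]
      linarith
    · have e1 : (p n : ℝ) ^ f = (p n : ℝ) ^ (f - 1) * p n := by
        rw [← Real.rpow_add_one (hP0 n).ne']; ring_nf
      rw [e1]
      have := hP0 n
      nlinarith
  have hcard : ∀ n, (p n : ℝ) ^ (Set.ncard {q : Fin (m n) × Fin n | H n q.1 q.2 = true}) =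
      ((compat (p n) (H n)).card : ℝ) := fun n => by rw [compat_card]; push_cast; rfl
  have hcpos : ∀ n, (0 : ℝ) < ((compat (p n) (H n)).card : ℝ) := fun n => by
    rw [← hcard]; have := hP0 n; positivity
  have hle1 : ∀ n (Φ : Matrix (Fin (m n)) (Fin n) (ZMod (p n)) → Prop),
      (cnt (compat (p n) (H n)) Φ : ℝ) / (compat (p n) (H n)).card ≤ 1 := fun n Φ => by
    rw [div_le_one (hcpos n)]; exact_mod_cast cnt_le_card _ _
  have hrho : ∀ n, rhoEff (p n) n R = √n * (p n : ℝ) ^ f / sC := fun n => by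
    unfold rhoEff sC; rw [hf]
  simp_rw [ncard_compat, hcard, hrho]
  have I : Tendsto (fun n : ℕ => (cnt (compat (p n) (H n)) (fun M => ∃ x : Fin n → ℤ,
      M.mulVec (fun j => ((x j : ℤ) : ZMod (p n))) = s n ∧
      intNorm x ≤ √n * (p n : ℝ) ^ f / sC * (1 - (n : ℝ) ^ (-ω))) : ℝ) /
        (compat (p n) (H n)).card) l (nhds 0) := by
    have tx : Tendsto (fun n : ℕ => Real.exp (-(n * (n : ℝ) ^ (-ω)) +
        sC / 2 * (n * (p n : ℝ) ^ (-f)))) atTop (nhds 0) := by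
      refine Real.tendsto_exp_atBot.comp ?_
      refine Tendsto.atBot_add (tendsto_neg_atTop_atBot.comp t8) (C := 0) ?_
      simpa using t1.const_mul (sC / 2)
    have tt := ((tx.add tE).mul tG).mono_left hle
    rw [add_zero, zero_mul] at tt
    refine tendsto_of_tendsto_of_tendsto_of_le_of_le' tendsto_const_nhds tt
      (Eventually.of_forall fun n => by positivity) ?_
    filter_upwards [hev] with n ⟨hn, hm, hg, _, h2, h3, hδ, hκ, hrp⟩
    exact partI_bound hg hf0 hf1 hD0 hn hm h2 h3 (by positivity) hδ hκ hrp (s n) (hs n)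
  have II : Tendsto (fun n : ℕ => (cnt (compat (p n) (H n)) (fun M => ∃ x : Fin n → ℤ,
      M.mulVec (fun j => ((x j : ℤ) : ZMod (p n))) = s n ∧
      intNorm x ≤ √n * (p n : ℝ) ^ f / sC * (1 + (n : ℝ) ^ (-ω))) : ℝ) /
        (compat (p n) (H n)).card) l (nhds 1) := by
    have tnum : Tendsto (fun n : ℕ => 1 - 2 * sC * (n * (p n : ℝ) ^ (-f)) -
        2 * sC * (n * (p n : ℝ) ^ (-f)) * Real.exp (2 * sC * (n * (p n : ℝ) ^ (-f))))
        atTop (nhds 1) := by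
      simpa using (tN.const_sub 1).sub (tN.mul (texp tN))
    have tden := (((texp tN).add (t7.mul tE)).mul tG).add t7
    have tt := (tnum.div tden (by norm_num)).mono_left hle
    rw [show (1 : ℝ) / ((1 + 0 * 0) * 1 + 0) = 1 by norm_num] at tt
    refine tendsto_of_tendsto_of_tendsto_of_le_of_le' tt tendsto_const_nhds ?_
      (Eventually.of_forall fun n => hle1 n _)
    filter_upwards [hev, hle (tnum.eventually_const_le one_pos)] with
      n ⟨hn, hm, hg, h1, h2, h3, hδ, hκ, hrp⟩ hpos
    exact partII_bound hg hf0 hf1 hD0 hn hm h1 h2 h3 (by positivity) hδ hκ hrp (s n) rfl rfl hpos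
  -- a solution within the larger radius and none within the smaller one force the third event
  refine ⟨I, II, ?_⟩
  have tt := II.sub I
  rw [sub_zero] at tt
  refine tendsto_of_tendsto_of_tendsto_of_le_of_le tt tendsto_const_nhds ?_
    (fun n => hle1 n _)
  intro n
  beta_reduce
  rw [← sub_div]
  refine div_le_div_of_nonneg_right ?_ (hcpos n).le
  rw [sub_le_iff_le_add]
  norm_cast
  refine cnt_or_le ?_
  rintro M - ⟨z, hz, hzr⟩
  by_cases hsmall : ∃ x : Fin n → ℤ, M.mulVec (fun j => ((x j : ℤ) : ZMod (p n))) = s n ∧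
      intNorm x ≤ √n * (p n : ℝ) ^ f / sC * (1 - (n : ℝ) ^ (-ω))
  · exact Or.inr hsmall
  · left
    intro x hx hmin
    push Not at hsmall
    exact ⟨(hsmall x hx).le, (hmin z hz).trans hzr⟩
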